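/- arXiv:2207.07009 — 3 statements merged into one kernel-verified Lean document; each statement's English description precedes it below -/
import Mathlib

section
/- Under the adapted pure-frontal setup with focal data, assume κ_t(0) ≠ 0, that the secondary cuspidal curvature vanishes identically along the singular curve (r_c(u) = 0 for all u near 0), and that 0 is a first order V_j-ridge point of f ((V_jκ_j)(0) = 0 and (V_jV_jκ_j)(0) ≠ 0). Then, near 0, the singular set of the focal surface C_j equals {v = 0}, every point (u,0) is a pure-frontal singular point of C_j (i.e. d(e_j)(V_j) = 0 at every point of the u-axis, where e_j = x_j/‖x_j‖ is the unit normal of C_j), and the Gaussian curvature and mean curvature of C_j, defined on the regular set of C_j via the unit normal e_j, are bounded on a neighborhood of 0. -/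
open Filter

noncomputable section

/-- Vectors in ℝ³, modeled as `Fin 3 → ℝ`. -/
abbrev R3 : Type := Fin 3 → ℝ

/-- The Euclidean inner product on ℝ³. -/
def dot3 (a b : R3) : ℝ := a 0 * b 0 + a 1 * b 1 + a 2 * b 2

/-- The Euclidean norm on ℝ³. -/
def norm3 (a : R3) : ℝ := Real.sqrt (dot3 a a)

/-- Partial derivative in the `u`-direction. -/
def pu {E : Type*} [NormedAddCommGroup E] [NormedSpace ℝ E] (F : ℝ × ℝ → E) (p : ℝ × ℝ) : E :=
  fderiv ℝ F p (1, 0)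

/-- Partial derivative in the `v`-direction. -/
def pv {E : Type*} [NormedAddCommGroup E] [NormedSpace ℝ E] (F : ℝ × ℝ → E) (p : ℝ × ℝ) : E :=
  fderiv ℝ F p (0, 1)

/-- The adapted pure-frontal setup: `f` is a frontal with unit normal `ν`,
`f_v = v·h`, `ν_v = v·ν₁`, the frame `{f_u, h, ν}` is linearly independent everywhere
and orthonormal along the `u`-axis. -/
structure AdaptedPureFrontal (f ν h ν₁ : ℝ × ℝ → R3) : Prop where
  smooth_f : ContDiff ℝ (⊤ : ℕ∞) f
  smooth_ν : ContDiff ℝ (⊤ : ℕ∞) ν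
  smooth_h : ContDiff ℝ (⊤ : ℕ∞) h
  smooth_ν₁ : ContDiff ℝ (⊤ : ℕ∞) ν₁
  unit_ν : ∀ p, dot3 (ν p) (ν p) = 1
  orth_fu_ν : ∀ p, dot3 (pu f p) (ν p) = 0
  orth_fv_ν : ∀ p, dot3 (pv f p) (ν p) = 0
  fv_eq : ∀ p : ℝ × ℝ, pv f p = p.2 • h p
  νv_eq : ∀ p : ℝ × ℝ, pv ν p = p.2 • ν₁ p
  indep : ∀ p, LinearIndependent ℝ ![pu f p, h p, ν p]
  adapted_fu : ∀ u : ℝ, dot3 (pu f (u, 0)) (pu f (u, 0)) = 1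
  adapted_h : ∀ u : ℝ, dot3 (h (u, 0)) (h (u, 0)) = 1
  adapted_fu_h : ∀ u : ℝ, dot3 (pu f (u, 0)) (h (u, 0)) = 0
  adapted_h_ν : ∀ u : ℝ, dot3 (h (u, 0)) (ν (u, 0)) = 0

/-- Ẽ = ⟨f_u, f_u⟩. -/
def Et (f : ℝ × ℝ → R3) (p : ℝ × ℝ) : ℝ := dot3 (pu f p) (pu f p)

/-- F̃ = ⟨f_u, h⟩. -/
def Ft (f h : ℝ × ℝ → R3) (p : ℝ × ℝ) : ℝ := dot3 (pu f p) (h p)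

/-- G̃ = ⟨h, h⟩. -/
def Gt (h : ℝ × ℝ → R3) (p : ℝ × ℝ) : ℝ := dot3 (h p) (h p)

/-- L̃ = −⟨f_u, ν_u⟩. -/
def Lt (f ν : ℝ × ℝ → R3) (p : ℝ × ℝ) : ℝ := -dot3 (pu f p) (pu ν p)

/-- M̃ = −⟨h, ν_u⟩. -/
def Mt (h ν : ℝ × ℝ → R3) (p : ℝ × ℝ) : ℝ := -dot3 (h p) (pu ν p)

/-- Ñ₁ = −⟨h, ν₁⟩. -/
def Nt1 (h ν₁ : ℝ × ℝ → R3) (p : ℝ × ℝ) : ℝ := -dot3 (h p) (ν₁ p)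

/-- The Gaussian curvature K = (L̃Ñ₁ − M̃²)/(ẼG̃ − F̃²). -/
def Kg (f ν h ν₁ : ℝ × ℝ → R3) (p : ℝ × ℝ) : ℝ :=
  (Lt f ν p * Nt1 h ν₁ p - Mt h ν p ^ 2) / (Et f p * Gt h p - Ft f h p ^ 2)

/-- The mean curvature H = (ẼÑ₁ − 2F̃M̃ + G̃L̃)/(2(ẼG̃ − F̃²)). -/
def Hm (f ν h ν₁ : ℝ × ℝ → R3) (p : ℝ × ℝ) : ℝ :=
  (Et f p * Nt1 h ν₁ p - 2 * Ft f h p * Mt h ν p + Gt h p * Lt f ν p) /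
    (2 * (Et f p * Gt h p - Ft f h p ^ 2))

/-- The principal curvature κ = H + ε√(H² − K); `ε = 1` gives κ₁ and `ε = -1` gives κ₂. -/
def kap (f ν h ν₁ : ℝ × ℝ → R3) (ε : ℝ) (p : ℝ × ℝ) : ℝ :=
  Hm f ν h ν₁ p + ε * Real.sqrt (Hm f ν h ν₁ p ^ 2 - Kg f ν h ν₁ p)

/-- First component of the principal vector field V = −v(M̃ − κF̃)∂_u + (L̃ − κẼ)∂_v. -/
def V1c (f ν h ν₁ : ℝ × ℝ → R3) (ε : ℝ) (p : ℝ × ℝ) : ℝ :=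
  -(p.2 * (Mt h ν p - kap f ν h ν₁ ε p * Ft f h p))

/-- Second component of the principal vector field V = −v(M̃ − κF̃)∂_u + (L̃ − κẼ)∂_v. -/
def V2c (f ν h ν₁ : ℝ × ℝ → R3) (ε : ℝ) (p : ℝ × ℝ) : ℝ :=
  Lt f ν p - kap f ν h ν₁ ε p * Et f p

/-- Directional derivative of `g` along the principal vector field V. -/
def VD (f ν h ν₁ : ℝ × ℝ → R3) (ε : ℝ) {E : Type*} [NormedAddCommGroup E] [NormedSpace ℝ E]
    (g : ℝ × ℝ → E) (p : ℝ × ℝ) : E :=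
  V1c f ν h ν₁ ε p • pu g p + V2c f ν h ν₁ ε p • pv g p

/-- The radius of principal curvature ρ = 1/κ. -/
def rho (f ν h ν₁ : ℝ × ℝ → R3) (ε : ℝ) (p : ℝ × ℝ) : ℝ := (kap f ν h ν₁ ε p)⁻¹

/-- The focal surface C = f + ρ·ν. -/
def Cf (f ν h ν₁ : ℝ × ℝ → R3) (ε : ℝ) (p : ℝ × ℝ) : R3 :=
  f p + rho f ν h ν₁ ε p • ν p

/-- The normal direction x = −(M̃ − κF̃)·f_u + (L̃ − κẼ)·h of the focal surface. -/
def xj (f ν h ν₁ : ℝ × ℝ → R3) (ε : ℝ) (p : ℝ × ℝ) : R3 :=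
  (-(Mt h ν p - kap f ν h ν₁ ε p * Ft f h p)) • pu f p +
    (Lt f ν p - kap f ν h ν₁ ε p * Et f p) • h p

/-- The unit normal e = x/‖x‖ of the focal surface. -/
def ej (f ν h ν₁ : ℝ × ℝ → R3) (ε : ℝ) (p : ℝ × ℝ) : R3 :=
  (norm3 (xj f ν h ν₁ ε p))⁻¹ • xj f ν h ν₁ ε p

/-- The limiting normal curvature κ_ν(u) = L̃(u,0). -/
def kν (f ν : ℝ × ℝ → R3) (u : ℝ) : ℝ := Lt f ν (u, 0)

/-- The cuspidal torsion κ_t(u) = M̃(u,0). -/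
def kt (h ν : ℝ × ℝ → R3) (u : ℝ) : ℝ := Mt h ν (u, 0)

/-- The bias r_b(u) = 3Ñ₁(u,0). -/
def rb (h ν₁ : ℝ × ℝ → R3) (u : ℝ) : ℝ := 3 * Nt1 h ν₁ (u, 0)

/-- The secondary cuspidal curvature r_c(u) = 24((Ñ₁)_v − 2F̃_vM̃ − G̃_vÑ₁)(u,0). -/
def rc (f ν h ν₁ : ℝ × ℝ → R3) (u : ℝ) : ℝ :=
  24 * (pv (Nt1 h ν₁) (u, 0) - 2 * pv (Ft f h) (u, 0) * Mt h ν (u, 0) -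
    pv (Gt h) (u, 0) * Nt1 h ν₁ (u, 0))

/-- The singular curvature κ_s(u) = ⟨f_uu, h⟩(u,0). -/
def ks (f h : ℝ × ℝ → R3) (u : ℝ) : ℝ := dot3 (pu (pu f) (u, 0)) (h (u, 0))

/-- The rank of the differential of `F` at `p`. -/
def rankAt (F : ℝ × ℝ → R3) (p : ℝ × ℝ) : ℕ :=
  Module.finrank ℝ (LinearMap.range (fderiv ℝ F p).toLinearMap)

/-- E^C = ⟨(C_j)_u, (C_j)_u⟩, first fundamental form of the focal surface. -/
def EC (f ν h ν₁ : ℝ × ℝ → R3) (ε : ℝ) (p : ℝ × ℝ) : ℝ :=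
  dot3 (pu (Cf f ν h ν₁ ε) p) (pu (Cf f ν h ν₁ ε) p)

/-- F^C = ⟨(C_j)_u, (C_j)_v⟩. -/
def FC (f ν h ν₁ : ℝ × ℝ → R3) (ε : ℝ) (p : ℝ × ℝ) : ℝ :=
  dot3 (pu (Cf f ν h ν₁ ε) p) (pv (Cf f ν h ν₁ ε) p)

/-- G^C = ⟨(C_j)_v, (C_j)_v⟩. -/
def GC (f ν h ν₁ : ℝ × ℝ → R3) (ε : ℝ) (p : ℝ × ℝ) : ℝ :=
  dot3 (pv (Cf f ν h ν₁ ε) p) (pv (Cf f ν h ν₁ ε) p)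

/-- L^C = −⟨(C_j)_u, (e_j)_u⟩, second fundamental form of the focal surface. -/
def LC (f ν h ν₁ : ℝ × ℝ → R3) (ε : ℝ) (p : ℝ × ℝ) : ℝ :=
  -dot3 (pu (Cf f ν h ν₁ ε) p) (pu (ej f ν h ν₁ ε) p)

/-- M^C = −⟨(C_j)_v, (e_j)_u⟩. -/
def MC (f ν h ν₁ : ℝ × ℝ → R3) (ε : ℝ) (p : ℝ × ℝ) : ℝ :=
  -dot3 (pv (Cf f ν h ν₁ ε) p) (pu (ej f ν h ν₁ ε) p)

/-- N^C = −⟨(C_j)_v, (e_j)_v⟩. -/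
def NC (f ν h ν₁ : ℝ × ℝ → R3) (ε : ℝ) (p : ℝ × ℝ) : ℝ :=
  -dot3 (pv (Cf f ν h ν₁ ε) p) (pv (ej f ν h ν₁ ε) p)

/-- The Gaussian curvature of the focal surface C_j, computed with unit normal e_j. -/
def KC (f ν h ν₁ : ℝ × ℝ → R3) (ε : ℝ) (p : ℝ × ℝ) : ℝ :=
  (LC f ν h ν₁ ε p * NC f ν h ν₁ ε p - MC f ν h ν₁ ε p ^ 2) /
    (EC f ν h ν₁ ε p * GC f ν h ν₁ ε p - FC f ν h ν₁ ε p ^ 2)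

/-- The mean curvature of the focal surface C_j, computed with unit normal e_j. -/
def HC (f ν h ν₁ : ℝ × ℝ → R3) (ε : ℝ) (p : ℝ × ℝ) : ℝ :=
  (EC f ν h ν₁ ε p * NC f ν h ν₁ ε p - 2 * FC f ν h ν₁ ε p * MC f ν h ν₁ ε p +
      GC f ν h ν₁ ε p * LC f ν h ν₁ ε p) /
    (2 * (EC f ν h ν₁ ε p * GC f ν h ν₁ ε p - FC f ν h ν₁ ε p ^ 2))


lemma s17_fderiv_dot (a b : ℝ × ℝ → R3) (p w : ℝ × ℝ) (ha : DifferentiableAt ℝ a p)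
    (hb : DifferentiableAt ℝ b p) :
    fderiv ℝ (fun q => dot3 (a q) (b q)) p w
      = dot3 (fderiv ℝ a p w) (b p) + dot3 (a p) (fderiv ℝ b p w) := by
  have ha' := hasFDerivAt_pi'.1 ha.hasFDerivAt
  have hb' := hasFDerivAt_pi'.1 hb.hasFDerivAt
  have := (((ha' 0).mul (hb' 0)).add ((ha' 1).mul (hb' 1))).add ((ha' 2).mul (hb' 2))
  have h2 : fderiv ℝ (fun q => dot3 (a q) (b q)) p = _ := this.fderiv
  rw [h2]
  simp [dot3]
  ring

lemma s17_pu_dot (a b : ℝ × ℝ → R3) (p : ℝ × ℝ) (ha : DifferentiableAt ℝ a p)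
    (hb : DifferentiableAt ℝ b p) :
    pu (fun q => dot3 (a q) (b q)) p = dot3 (pu a p) (b p) + dot3 (a p) (pu b p) :=
  s17_fderiv_dot a b p _ ha hb

lemma s17_pv_dot (a b : ℝ × ℝ → R3) (p : ℝ × ℝ) (ha : DifferentiableAt ℝ a p)
    (hb : DifferentiableAt ℝ b p) :
    pv (fun q => dot3 (a q) (b q)) p = dot3 (pv a p) (b p) + dot3 (a p) (pv b p) :=
  s17_fderiv_dot a b p _ ha hb

lemma s17_dot_cd {a b : ℝ × ℝ → R3} {p : ℝ × ℝ} {n : WithTop ℕ∞} (ha : ContDiffAt ℝ n a p)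
    (hb : ContDiffAt ℝ n b p) : ContDiffAt ℝ n (fun q => dot3 (a q) (b q)) p := by
  have ha' := contDiffAt_pi.1 ha
  have hb' := contDiffAt_pi.1 hb
  exact (((ha' 0).mul (hb' 0)).add ((ha' 1).mul (hb' 1))).add ((ha' 2).mul (hb' 2))

lemma s17_fd_cd {E : Type*} [NormedAddCommGroup E] [NormedSpace ℝ E] {a : ℝ × ℝ → E} {p : ℝ × ℝ}
    (w : ℝ × ℝ) (ha : ContDiffAt ℝ (⊤ : ℕ∞) a p) :
    ContDiffAt ℝ (⊤ : ℕ∞) (fun q => fderiv ℝ a q w) p :=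
  (ha.fderiv_right (m := ((⊤ : ℕ∞) : WithTop ℕ∞)) (by simp)).clm_apply contDiffAt_const

lemma s17_pu_cd {E : Type*} [NormedAddCommGroup E] [NormedSpace ℝ E] {a : ℝ × ℝ → E} {p : ℝ × ℝ}
    (ha : ContDiffAt ℝ (⊤ : ℕ∞) a p) : ContDiffAt ℝ (⊤ : ℕ∞) (pu a) p := s17_fd_cd _ ha

lemma s17_pv_cd {E : Type*} [NormedAddCommGroup E] [NormedSpace ℝ E] {a : ℝ × ℝ → E} {p : ℝ × ℝ}
    (ha : ContDiffAt ℝ (⊤ : ℕ∞) a p) : ContDiffAt ℝ (⊤ : ℕ∞) (pv a) p := s17_fd_cd _ ha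

lemma s17_diff {E : Type*} [NormedAddCommGroup E] [NormedSpace ℝ E] {a : ℝ × ℝ → E} {p : ℝ × ℝ}
    (ha : ContDiffAt ℝ (⊤ : ℕ∞) a p) : DifferentiableAt ℝ a p :=
  ha.differentiableAt (by simp)

lemma s17_symm {E : Type*} [NormedAddCommGroup E] [NormedSpace ℝ E] {a : ℝ × ℝ → E} {p : ℝ × ℝ}
    (ha : ContDiffAt ℝ (⊤ : ℕ∞) a p) : pv (pu a) p = pu (pv a) p := by
  have hs : IsSymmSndFDerivAt ℝ a p := by
    apply ha.isSymmSndFDerivAt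
    simp
    exact WithTop.coe_le_coe.2 (le_top : (2 : ℕ∞) ≤ ⊤)
  have hd : DifferentiableAt ℝ (fderiv ℝ a) p :=
    (ha.fderiv_right (m := ((⊤ : ℕ∞) : WithTop ℕ∞)) (by simp)).differentiableAt (by simp)
  have key : ∀ w z : ℝ × ℝ, fderiv ℝ (fun q => fderiv ℝ a q w) p z
      = fderiv ℝ (fderiv ℝ a) p z w := by
    intro w z
    rw [fderiv_clm_apply hd (differentiableAt_const w)]
    simp
  change fderiv ℝ (fun q => fderiv ℝ a q (1,0)) p (0,1)
    = fderiv ℝ (fun q => fderiv ℝ a q (0,1)) p (1,0)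
  rw [key, key]
  exact hs _ _

lemma s17_zero {a b c z : R3} (hi : LinearIndependent ℝ ![a, b, c])
    (ha : dot3 z a = 0) (hb : dot3 z b = 0) (hc : dot3 z c = 0) : z = 0 := by
  have hu : IsUnit (Matrix.of ![a, b, c]) := Matrix.linearIndependent_rows_iff_isUnit.1 hi
  have hd : (Matrix.of ![a, b, c]).det ≠ 0 :=
    ((Matrix.isUnit_iff_isUnit_det _).1 hu).ne_zero
  apply Matrix.eq_zero_of_mulVec_eq_zero hd
  unfold dot3 at *
  ext i
  fin_cases i <;> simp [Matrix.mulVec, dotProduct, Fin.sum_univ_three] <;> linarith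

lemma s17_gram {a b c : R3} (hi : LinearIndependent ℝ ![a, b, c]) :
    dot3 a a * dot3 b b - dot3 a b ^ 2 ≠ 0 := by
  intro h0
  have hz : (dot3 b b) • a - (dot3 a b) • b = 0 := by
    have : dot3 ((dot3 b b) • a - (dot3 a b) • b) ((dot3 b b) • a - (dot3 a b) • b) = 0 := by
      have : dot3 ((dot3 b b) • a - (dot3 a b) • b) ((dot3 b b) • a - (dot3 a b) • b)
          = dot3 b b * (dot3 a a * dot3 b b - dot3 a b ^ 2) := by
        simp [dot3]; ring
      rw [this, h0, mul_zero]
    set z := (dot3 b b) • a - (dot3 a b) • b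
    unfold dot3 at this
    ext i
    fin_cases i <;> simp <;> nlinarith [sq_nonneg (z 0), sq_nonneg (z 1), sq_nonneg (z 2)]
  have := Fintype.linearIndependent_iff.1 hi ![dot3 b b, -dot3 a b, 0] (by
    simp [Fin.sum_univ_three]
    rw [← hz]; abel) 0
  have hb : b = 0 := by
    simp at this
    unfold dot3 at this
    ext i
    fin_cases i <;> simp <;> nlinarith [sq_nonneg (b 0), sq_nonneg (b 1), sq_nonneg (b 2)]
  exact hi.ne_zero 1 (by simpa using hb)

lemma s17_tend : Tendsto (fun p : ℝ × ℝ => (p, ((p.1, 0) : ℝ × ℝ))) (nhds 0) (nhds (0, 0)) := by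
  have : Continuous (fun p : ℝ × ℝ => (p, ((p.1, 0) : ℝ × ℝ))) := by fun_prop
  exact this.tendsto 0

lemma s17_ev {P : ℝ × ℝ → Prop} (h : ∀ᶠ u in nhds (0 : ℝ), P (u, 0)) :
    ∀ᶠ p in nhds (0 : ℝ × ℝ), P (p.1, 0) :=
  (continuous_fst.tendsto (0 : ℝ × ℝ)).eventually h

lemma s17_up {E : Type*} [NormedAddCommGroup E] [NormedSpace ℝ E] {g : ℝ × ℝ → E}
    (hg : ContDiffAt ℝ (⊤ : ℕ∞) g 0) (h0 : ∀ᶠ p in nhds (0 : ℝ × ℝ), g (p.1, 0) = 0) :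
    ∃ K : ℝ, 0 ≤ K ∧ ∀ᶠ p in nhds (0 : ℝ × ℝ), ‖g p‖ ≤ K * |p.2| := by
  have hs := (hg.hasStrictFDerivAt (by simp)).isBigO_sub
  obtain ⟨K, hK0, hK⟩ := hs.exists_nonneg
  have := s17_tend.eventually hK.bound
  refine ⟨K, hK0, ?_⟩
  filter_upwards [this, h0] with p hp hp0
  have e : p - (p.1, 0) = ((0 : ℝ), p.2) := by ext <;> simp
  simp only [hp0, sub_zero, e] at hp
  simpa [Prod.norm_def] using hp

lemma s17_low {g : ℝ × ℝ → ℝ}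
    (hg : ContDiffAt ℝ (⊤ : ℕ∞) g 0) (h0 : ∀ᶠ p in nhds (0 : ℝ × ℝ), g (p.1, 0) = 0)
    (h1 : pv g 0 ≠ 0) :
    ∃ c : ℝ, 0 < c ∧ ∀ᶠ p in nhds (0 : ℝ × ℝ), c * |p.2| ≤ |g p| := by
  have hs := (hg.hasStrictFDerivAt (by simp)).isLittleO
  have hc : 0 < |pv g 0| / 2 := by positivity
  have := s17_tend.eventually (hs.bound hc)
  refine ⟨_, hc, ?_⟩
  filter_upwards [this, h0] with p hp hp0
  have e : p - (p.1, 0) = p.2 • ((0 : ℝ), (1 : ℝ)) := by ext <;> simp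
  simp only [hp0, sub_zero, e, map_smul] at hp
  change |g p - p.2 * pv g 0| ≤ _ at hp
  have e2 : ‖p.2 • ((0 : ℝ), (1 : ℝ))‖ = |p.2| := by simp [Prod.norm_def]
  rw [e2] at hp
  have := abs_sub_abs_le_abs_sub (p.2 * pv g 0) (g p)
  rw [abs_sub_comm, abs_mul] at this
  linarith

lemma s17_bd {E : Type*} [NormedAddCommGroup E] {g : ℝ × ℝ → E} (hg : ContinuousAt g 0) :
    ∃ K : ℝ, 0 < K ∧ ∀ᶠ p in nhds (0 : ℝ × ℝ), ‖g p‖ ≤ K :=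
  ⟨‖g 0‖ + 1, by positivity, by
    filter_upwards [hg.norm.eventually_lt_const (lt_add_one _)] with p hp using hp.le⟩

lemma s17_dot_le (a b : R3) : |dot3 a b| ≤ 3 * (‖a‖ * ‖b‖) := by
  have h : ∀ i, |a i * b i| ≤ ‖a‖ * ‖b‖ := fun i => by
    rw [abs_mul]
    exact mul_le_mul (norm_le_pi_norm a i) (norm_le_pi_norm b i) (abs_nonneg _) (norm_nonneg _)
  unfold dot3
  have := abs_add_three (a 0 * b 0) (a 1 * b 1) (a 2 * b 2)
  linarith [h 0, h 1, h 2]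

section s17
variable {f ν h ν₁ : ℝ × ℝ → R3} {ε : ℝ}

lemma s17_f_cd (H : AdaptedPureFrontal f ν h ν₁) (p : ℝ × ℝ) : ContDiffAt ℝ (⊤ : ℕ∞) f p :=
  H.smooth_f.contDiffAt
lemma s17_n_cd (H : AdaptedPureFrontal f ν h ν₁) (p : ℝ × ℝ) : ContDiffAt ℝ (⊤ : ℕ∞) ν p :=
  H.smooth_ν.contDiffAt
lemma s17_h_cd (H : AdaptedPureFrontal f ν h ν₁) (p : ℝ × ℝ) : ContDiffAt ℝ (⊤ : ℕ∞) h p :=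
  H.smooth_h.contDiffAt
lemma s17_n1_cd (H : AdaptedPureFrontal f ν h ν₁) (p : ℝ × ℝ) : ContDiffAt ℝ (⊤ : ℕ∞) ν₁ p :=
  H.smooth_ν₁.contDiffAt

lemma s17_E_cd (H : AdaptedPureFrontal f ν h ν₁) (p : ℝ × ℝ) : ContDiffAt ℝ (⊤ : ℕ∞) (Et f) p :=
  s17_dot_cd (s17_pu_cd (s17_f_cd H p)) (s17_pu_cd (s17_f_cd H p))
lemma s17_F_cd (H : AdaptedPureFrontal f ν h ν₁) (p : ℝ × ℝ) : ContDiffAt ℝ (⊤ : ℕ∞) (Ft f h) p :=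
  s17_dot_cd (s17_pu_cd (s17_f_cd H p)) (s17_h_cd H p)
lemma s17_G_cd (H : AdaptedPureFrontal f ν h ν₁) (p : ℝ × ℝ) : ContDiffAt ℝ (⊤ : ℕ∞) (Gt h) p :=
  s17_dot_cd (s17_h_cd H p) (s17_h_cd H p)
lemma s17_L_cd (H : AdaptedPureFrontal f ν h ν₁) (p : ℝ × ℝ) : ContDiffAt ℝ (⊤ : ℕ∞) (Lt f ν) p :=
  (s17_dot_cd (s17_pu_cd (s17_f_cd H p)) (s17_pu_cd (s17_n_cd H p))).neg
lemma s17_M_cd (H : AdaptedPureFrontal f ν h ν₁) (p : ℝ × ℝ) : ContDiffAt ℝ (⊤ : ℕ∞) (Mt h ν) p :=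
  (s17_dot_cd (s17_h_cd H p) (s17_pu_cd (s17_n_cd H p))).neg
lemma s17_N_cd (H : AdaptedPureFrontal f ν h ν₁) (p : ℝ × ℝ) : ContDiffAt ℝ (⊤ : ℕ∞) (Nt1 h ν₁) p :=
  (s17_dot_cd (s17_h_cd H p) (s17_n1_cd H p)).neg

lemma s17_D (H : AdaptedPureFrontal f ν h ν₁) (p : ℝ × ℝ) : Et f p * Gt h p - Ft f h p ^ 2 ≠ 0 :=
  s17_gram (H.indep p)

lemma s17_K_cd (H : AdaptedPureFrontal f ν h ν₁) (p : ℝ × ℝ) :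
    ContDiffAt ℝ (⊤ : ℕ∞) (Kg f ν h ν₁) p :=
  (((s17_L_cd H p).mul (s17_N_cd H p)).sub ((s17_M_cd H p).pow 2)).div
    (((s17_E_cd H p).mul (s17_G_cd H p)).sub ((s17_F_cd H p).pow 2)) (s17_D H p)

lemma s17_H_cd (H : AdaptedPureFrontal f ν h ν₁) (p : ℝ × ℝ) :
    ContDiffAt ℝ (⊤ : ℕ∞) (Hm f ν h ν₁) p :=
  ((((s17_E_cd H p).mul (s17_N_cd H p)).sub
    ((contDiffAt_const.mul (s17_F_cd H p)).mul (s17_M_cd H p))).add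
      ((s17_G_cd H p).mul (s17_L_cd H p))).div
    (contDiffAt_const.mul (((s17_E_cd H p).mul (s17_G_cd H p)).sub ((s17_F_cd H p).pow 2)))
    (mul_ne_zero two_ne_zero (s17_D H p))

lemma s17_k_cd (H : AdaptedPureFrontal f ν h ν₁)
    (hHK : ∀ p : ℝ × ℝ, Hm f ν h ν₁ p ^ 2 - Kg f ν h ν₁ p > 0) (p : ℝ × ℝ) :
    ContDiffAt ℝ (⊤ : ℕ∞) (kap f ν h ν₁ ε) p :=
  (s17_H_cd H p).add (contDiffAt_const.mul
    ((((s17_H_cd H p).pow 2).sub (s17_K_cd H p)).sqrt (hHK p).ne'))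

lemma s17_r_cd (H : AdaptedPureFrontal f ν h ν₁)
    (hHK : ∀ p : ℝ × ℝ, Hm f ν h ν₁ p ^ 2 - Kg f ν h ν₁ p > 0)
    (hκ : ∀ p : ℝ × ℝ, kap f ν h ν₁ ε p ≠ 0) (p : ℝ × ℝ) :
    ContDiffAt ℝ (⊤ : ℕ∞) (rho f ν h ν₁ ε) p :=
  (s17_k_cd H hHK p).inv (hκ p)

lemma s17_C_cd (H : AdaptedPureFrontal f ν h ν₁)
    (hHK : ∀ p : ℝ × ℝ, Hm f ν h ν₁ p ^ 2 - Kg f ν h ν₁ p > 0)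
    (hκ : ∀ p : ℝ × ℝ, kap f ν h ν₁ ε p ≠ 0) (p : ℝ × ℝ) :
    ContDiffAt ℝ (⊤ : ℕ∞) (Cf f ν h ν₁ ε) p :=
  (s17_f_cd H p).add ((s17_r_cd H hHK hκ p).smul (s17_n_cd H p))

lemma s17_V1_cd (H : AdaptedPureFrontal f ν h ν₁)
    (hHK : ∀ p : ℝ × ℝ, Hm f ν h ν₁ p ^ 2 - Kg f ν h ν₁ p > 0) (p : ℝ × ℝ) :
    ContDiffAt ℝ (⊤ : ℕ∞) (V1c f ν h ν₁ ε) p :=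
  (contDiffAt_snd.mul ((s17_M_cd H p).sub ((s17_k_cd H hHK p).mul (s17_F_cd H p)))).neg

lemma s17_V2_cd (H : AdaptedPureFrontal f ν h ν₁)
    (hHK : ∀ p : ℝ × ℝ, Hm f ν h ν₁ p ^ 2 - Kg f ν h ν₁ p > 0) (p : ℝ × ℝ) :
    ContDiffAt ℝ (⊤ : ℕ∞) (V2c f ν h ν₁ ε) p :=
  (s17_L_cd H p).sub ((s17_k_cd H hHK p).mul (s17_E_cd H p))

lemma s17_VD_cd (H : AdaptedPureFrontal f ν h ν₁)
    (hHK : ∀ p : ℝ × ℝ, Hm f ν h ν₁ p ^ 2 - Kg f ν h ν₁ p > 0) (p : ℝ × ℝ)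
    {g : ℝ × ℝ → ℝ} (hg : ContDiffAt ℝ (⊤ : ℕ∞) g p) :
    ContDiffAt ℝ (⊤ : ℕ∞) (VD f ν h ν₁ ε g) p :=
  ((s17_V1_cd H hHK p).smul (s17_pu_cd hg)).add ((s17_V2_cd H hHK p).smul (s17_pv_cd hg))

lemma s17_x_cd (H : AdaptedPureFrontal f ν h ν₁)
    (hHK : ∀ p : ℝ × ℝ, Hm f ν h ν₁ p ^ 2 - Kg f ν h ν₁ p > 0) (p : ℝ × ℝ) :
    ContDiffAt ℝ (⊤ : ℕ∞) (xj f ν h ν₁ ε) p :=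
  (((s17_M_cd H p).sub ((s17_k_cd H hHK p).mul (s17_F_cd H p))).neg.smul
    (s17_pu_cd (s17_f_cd H p))).add ((s17_V2_cd H hHK p).smul (s17_h_cd H p))

lemma s17_dot_pos {a : R3} (ha : a ≠ 0) : 0 < dot3 a a := by
  by_contra hn
  apply ha
  unfold dot3 at hn
  ext i
  fin_cases i <;> simp <;> nlinarith [sq_nonneg (a 0), sq_nonneg (a 1), sq_nonneg (a 2)]

lemma s17_e_cd (H : AdaptedPureFrontal f ν h ν₁)
    (hHK : ∀ p : ℝ × ℝ, Hm f ν h ν₁ p ^ 2 - Kg f ν h ν₁ p > 0) (p : ℝ × ℝ)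
    (hx : xj f ν h ν₁ ε p ≠ 0) :
    ContDiffAt ℝ (⊤ : ℕ∞) (ej f ν h ν₁ ε) p := by
  have hp := s17_dot_pos hx
  have hxx := s17_x_cd (ε := ε) H hHK p
  exact (((s17_dot_cd hxx hxx).sqrt hp.ne').inv (Real.sqrt_pos.2 hp).ne').smul hxx

lemma s17_dot_comm (a b : R3) : dot3 a b = dot3 b a := by unfold dot3; ring
lemma s17_dot_add (a b c : R3) : dot3 a (b + c) = dot3 a b + dot3 a c := by
  simp [dot3]; ring
lemma s17_dot_smul (a b : R3) (r : ℝ) : dot3 a (r • b) = r * dot3 a b := by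
  simp [dot3]; ring
lemma s17_add_dot (a b c : R3) : dot3 (b + c) a = dot3 b a + dot3 c a := by
  simp [dot3]; ring
lemma s17_smul_dot (a b : R3) (r : ℝ) : dot3 (r • b) a = r * dot3 b a := by
  simp [dot3]; ring
lemma s17_zero_dot (a : R3) : dot3 0 a = 0 := by simp [dot3]
lemma s17_dot_zero (a : R3) : dot3 a 0 = 0 := by simp [dot3]

/-- the principal curvature equation -/
lemma s17_keq (H : AdaptedPureFrontal f ν h ν₁) (hε : ε = 1 ∨ ε = -1)
    (hHK : ∀ p : ℝ × ℝ, Hm f ν h ν₁ p ^ 2 - Kg f ν h ν₁ p > 0) (p : ℝ × ℝ) :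
    (Lt f ν p - kap f ν h ν₁ ε p * Et f p) * (Nt1 h ν₁ p - kap f ν h ν₁ ε p * Gt h p)
      - (Mt h ν p - kap f ν h ν₁ ε p * Ft f h p) ^ 2 = 0 := by
  have hD := s17_D H p
  have e2 : ε ^ 2 = 1 := by rcases hε with r | r <;> rw [r] <;> norm_num
  have hk : (kap f ν h ν₁ ε p - Hm f ν h ν₁ p) ^ 2 = Hm f ν h ν₁ p ^ 2 - Kg f ν h ν₁ p := by
    have := Real.sq_sqrt (hHK p).le
    unfold kap
    calc _ = ε ^ 2 * Real.sqrt (Hm f ν h ν₁ p ^ 2 - Kg f ν h ν₁ p) ^ 2 := by ring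
      _ = _ := by rw [e2, this, one_mul]
  set k := kap f ν h ν₁ ε p
  have h1 : Kg f ν h ν₁ p * (Et f p * Gt h p - Ft f h p ^ 2)
      = Lt f ν p * Nt1 h ν₁ p - Mt h ν p ^ 2 := by
    unfold Kg; field_simp
  have h2 : 2 * Hm f ν h ν₁ p * (Et f p * Gt h p - Ft f h p ^ 2)
      = Et f p * Nt1 h ν₁ p - 2 * Ft f h p * Mt h ν p + Gt h p * Lt f ν p := by
    unfold Hm; field_simp
  linear_combination (Et f p * Gt h p - Ft f h p ^ 2) * hk - h1 + k * h2

lemma s17_hn (H : AdaptedPureFrontal f ν h ν₁) (p : ℝ × ℝ) : dot3 (h p) (ν p) = 0 := by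
  by_cases hp : p.2 = 0
  · obtain ⟨a, b⟩ := p
    simp only at hp
    subst hp
    exact H.adapted_h_ν a
  · have := H.orth_fv_ν p
    rw [H.fv_eq, s17_smul_dot] at this
    exact (mul_eq_zero.1 this).resolve_left hp

lemma s17_pu_congr {E : Type*} [NormedAddCommGroup E] [NormedSpace ℝ E] {a b : ℝ × ℝ → E}
    {p : ℝ × ℝ} (hab : a =ᶠ[nhds p] b) : pu a p = pu b p := by
  unfold pu; rw [hab.fderiv_eq]
lemma s17_pv_congr {E : Type*} [NormedAddCommGroup E] [NormedSpace ℝ E] {a b : ℝ × ℝ → E}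
    {p : ℝ × ℝ} (hab : a =ᶠ[nhds p] b) : pv a p = pv b p := by
  unfold pv; rw [hab.fderiv_eq]
lemma s17_pu_const {E : Type*} [NormedAddCommGroup E] [NormedSpace ℝ E] (c : E) (p : ℝ × ℝ) :
    pu (fun _ => c) p = 0 := by simp [pu]
lemma s17_pv_const {E : Type*} [NormedAddCommGroup E] [NormedSpace ℝ E] (c : E) (p : ℝ × ℝ) :
    pv (fun _ => c) p = 0 := by simp [pv]

lemma s17_nun (H : AdaptedPureFrontal f ν h ν₁) (p : ℝ × ℝ) : dot3 (pu ν p) (ν p) = 0 := by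
  have h1 := s17_pu_dot ν ν p (s17_diff (s17_n_cd H p)) (s17_diff (s17_n_cd H p))
  rw [funext H.unit_ν, s17_pu_const, s17_dot_comm (ν p)] at h1
  linarith
lemma s17_nvn (H : AdaptedPureFrontal f ν h ν₁) (p : ℝ × ℝ) : dot3 (pv ν p) (ν p) = 0 := by
  have h1 := s17_pv_dot ν ν p (s17_diff (s17_n_cd H p)) (s17_diff (s17_n_cd H p))
  rw [funext H.unit_ν, s17_pv_const, s17_dot_comm (ν p)] at h1
  linarith

lemma s17_funv (H : AdaptedPureFrontal f ν h ν₁) (p : ℝ × ℝ) :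
    dot3 (pu f p) (pv ν p) = - (p.2 * Mt h ν p) := by
  have h1 := s17_pv_dot (pu f) ν p (s17_diff (s17_pu_cd (s17_f_cd H p))) (s17_diff (s17_n_cd H p))
  have h2 := s17_pu_dot (pv f) ν p (s17_diff (s17_pv_cd (s17_f_cd H p))) (s17_diff (s17_n_cd H p))
  rw [funext H.orth_fu_ν, s17_pv_const, s17_symm (s17_f_cd H p)] at h1
  rw [funext H.orth_fv_ν, s17_pu_const, H.fv_eq p, s17_smul_dot] at h2
  unfold Mt
  linarith

lemma s17_hnv (H : AdaptedPureFrontal f ν h ν₁) (p : ℝ × ℝ) :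
    dot3 (h p) (pv ν p) = - (p.2 * Nt1 h ν₁ p) := by
  rw [H.νv_eq, s17_dot_smul]; unfold Nt1; ring

/-- mixed derivatives of a map with `a_v = v b` vanish on the axis -/
lemma s17_mixed {a b : ℝ × ℝ → R3} (ha : ∀ p, ContDiffAt ℝ (⊤ : ℕ∞) a p)
    (hb : ∀ p, ContDiffAt ℝ (⊤ : ℕ∞) b p) (hab : ∀ p : ℝ × ℝ, pv a p = p.2 • b p) (u : ℝ) :
    pv (pu a) (u, 0) = 0 := by
  rw [s17_symm (ha _), funext hab]
  unfold pu
  rw [fderiv_fun_smul differentiableAt_snd (s17_diff (hb _))]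
  simp [fderiv_snd]

lemma s17_Ev (H : AdaptedPureFrontal f ν h ν₁) (u : ℝ) : pv (Et f) (u, 0) = 0 := by
  have h0 := s17_mixed (s17_f_cd H) (s17_h_cd H) H.fv_eq u
  have hd := s17_diff (s17_pu_cd (s17_f_cd H (u, 0)))
  have := s17_pv_dot (pu f) (pu f) (u, 0) hd hd
  rw [h0, s17_zero_dot, s17_dot_zero, add_zero] at this
  exact this

lemma s17_pv_neg (a : ℝ × ℝ → ℝ) (p : ℝ × ℝ) : pv (fun q => - a q) p = - pv a p := by
  simp [pv]

lemma s17_Lv (H : AdaptedPureFrontal f ν h ν₁) (u : ℝ) : pv (Lt f ν) (u, 0) = 0 := by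
  have h0 := s17_mixed (s17_f_cd H) (s17_h_cd H) H.fv_eq u
  have h1 := s17_mixed (s17_n_cd H) (s17_n1_cd H) H.νv_eq u
  have := s17_pv_dot (pu f) (pu ν) (u, 0) (s17_diff (s17_pu_cd (s17_f_cd H (u, 0))))
    (s17_diff (s17_pu_cd (s17_n_cd H (u, 0))))
  rw [h0, h1, s17_zero_dot, s17_dot_zero, add_zero] at this
  have h2 : pv (Lt f ν) (u, 0) = - pv (fun q => dot3 (pu f q) (pu ν q)) (u, 0) := s17_pv_neg _ _
  rw [h2, this, neg_zero]

/-- Weingarten along the axis -/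
lemma s17_wein (H : AdaptedPureFrontal f ν h ν₁) (u : ℝ) :
    pu ν (u, 0) + (Lt f ν (u, 0) • pu f (u, 0) + Mt h ν (u, 0) • h (u, 0)) = 0 := by
  have a1 := H.adapted_fu u
  have a2 := H.adapted_h u
  have a3 := H.adapted_fu_h u
  have a4 := H.adapted_h_ν u
  have a5 := H.orth_fu_ν (u, 0)
  have a6 := s17_nun H (u, 0)
  have a7 := s17_dot_comm (h (u, 0)) (pu f (u, 0))
  apply s17_zero (H.indep (u, 0))
  · rw [s17_add_dot, s17_add_dot, s17_smul_dot, s17_smul_dot, a1, a7, a3, s17_dot_comm]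
    unfold Lt; ring
  · rw [s17_add_dot, s17_add_dot, s17_smul_dot, s17_smul_dot, a2, a3, s17_dot_comm]
    unfold Mt; ring
  · rw [s17_add_dot, s17_add_dot, s17_smul_dot, s17_smul_dot, a4, a5, a6]
    ring

lemma s17_Mv (H : AdaptedPureFrontal f ν h ν₁) (u : ℝ) :
    pv (Mt h ν) (u, 0) = pv (Ft f h) (u, 0) * Lt f ν (u, 0)
      + pv (Gt h) (u, 0) * Mt h ν (u, 0) / 2 := by
  have h0 := s17_mixed (s17_f_cd H) (s17_h_cd H) H.fv_eq u
  have h1 := s17_mixed (s17_n_cd H) (s17_n1_cd H) H.νv_eq u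
  have dh := s17_diff (s17_h_cd H (u, 0))
  have dfu := s17_diff (s17_pu_cd (s17_f_cd H (u, 0)))
  have m := s17_pv_dot h (pu ν) (u, 0) dh (s17_diff (s17_pu_cd (s17_n_cd H (u, 0))))
  rw [h1, s17_dot_zero, add_zero] at m
  have h2 : pv (Mt h ν) (u, 0) = - pv (fun q => dot3 (h q) (pu ν q)) (u, 0) := s17_pv_neg _ _
  have hF : pv (Ft f h) (u, 0) = _ := s17_pv_dot (pu f) h (u, 0) dfu dh
  have hG : pv (Gt h) (u, 0) = _ := s17_pv_dot h h (u, 0) dh dh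
  rw [h0, s17_zero_dot, zero_add, s17_dot_comm] at hF
  rw [s17_dot_comm (h (u, 0))] at hG
  have w := congrArg (dot3 (pv h (u, 0))) (s17_wein H u)
  rw [s17_dot_add, s17_dot_add, s17_dot_smul, s17_dot_smul, s17_dot_zero] at w
  rw [h2, m, hF, hG]
  linarith

lemma s17_kv (H : AdaptedPureFrontal f ν h ν₁) (hε : ε = 1 ∨ ε = -1)
    (hHK : ∀ p : ℝ × ℝ, Hm f ν h ν₁ p ^ 2 - Kg f ν h ν₁ p > 0) (u : ℝ)
    (hrc : rc f ν h ν₁ u = 0) : pv (kap f ν h ν₁ ε) (u, 0) = 0 := by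
  have keq := funext (s17_keq (ε := ε) H hε hHK)
  have hd := congrArg (fun F => pv F (u, 0)) keq
  simp only [s17_pv_const] at hd
  have dE := (s17_diff (s17_E_cd H (u, 0))).hasFDerivAt
  have dF := (s17_diff (s17_F_cd H (u, 0))).hasFDerivAt
  have dG := (s17_diff (s17_G_cd H (u, 0))).hasFDerivAt
  have dL := (s17_diff (s17_L_cd H (u, 0))).hasFDerivAt
  have dM := (s17_diff (s17_M_cd H (u, 0))).hasFDerivAt
  have dN := (s17_diff (s17_N_cd H (u, 0))).hasFDerivAt
  have dk := (s17_diff (s17_k_cd (ε := ε) H hHK (u, 0))).hasFDerivAt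
  have hh := ((dL.sub (dk.mul dE)).mul (dN.sub (dk.mul dG))).sub ((dM.sub (dk.mul dF)).pow 2)
  have hh2 : fderiv ℝ (fun p => (Lt f ν p - kap f ν h ν₁ ε p * Et f p) * (Nt1 h ν₁ p - kap f ν h ν₁ ε p * Gt h p)
      - (Mt h ν p - kap f ν h ν₁ ε p * Ft f h p) ^ 2) (u, 0) = _ := hh.fderiv
  have E1 : Et f (u, 0) = 1 := H.adapted_fu u
  have G1 : Gt h (u, 0) = 1 := H.adapted_h u
  have F0 : Ft f h (u, 0) = 0 := H.adapted_fu_h u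
  have Ev := s17_Ev H u
  have Lv := s17_Lv H u
  have Mv := s17_Mv H u
  have k0 := s17_keq (ε := ε) H hε hHK (u, 0)
  have hs : Lt f ν (u, 0) + Nt1 h ν₁ (u, 0) - 2 * kap f ν h ν₁ ε (u, 0) ≠ 0 := by
    have hpos := Real.sqrt_pos.2 (hHK (u, 0))
    have hH : Hm f ν h ν₁ (u, 0) = (Lt f ν (u, 0) + Nt1 h ν₁ (u, 0)) / 2 := by
      unfold Hm; rw [E1, G1, F0]; ring
    have : Lt f ν (u, 0) + Nt1 h ν₁ (u, 0) - 2 * kap f ν h ν₁ ε (u, 0) =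
      - 2 * ε * Real.sqrt (Hm f ν h ν₁ (u, 0) ^ 2 - Kg f ν h ν₁ (u, 0)) := by
      unfold kap
      linear_combination -2 * hH
    rw [this]
    rcases hε with r | r <;> rw [r] <;> simp <;> exact hpos.ne'
  unfold rc at hrc
  unfold pv at *
  rw [hh2] at hd
  simp at hd
  rw [E1, F0, G1] at *
  rw [Ev, Lv, Mv] at hd
  apply (mul_eq_zero.1 (?_ : (Lt f ν (u, 0) + Nt1 h ν₁ (u, 0) - 2 * kap f ν h ν₁ ε (u, 0)) * _ = 0)).resolve_left hs
  linear_combination (exp := 1) (Lt f ν (u, 0) - kap f ν h ν₁ ε (u, 0)) * hrc / 24 - hd + fderiv ℝ (Gt h) (u, 0) (0, 1) * k0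

lemma s17_Cd (H : AdaptedPureFrontal f ν h ν₁)
    (hHK : ∀ p : ℝ × ℝ, Hm f ν h ν₁ p ^ 2 - Kg f ν h ν₁ p > 0)
    (hκ : ∀ p : ℝ × ℝ, kap f ν h ν₁ ε p ≠ 0) (p w : ℝ × ℝ) :
    fderiv ℝ (Cf f ν h ν₁ ε) p w = fderiv ℝ f p w + (rho f ν h ν₁ ε p • fderiv ℝ ν p w
      + fderiv ℝ (rho f ν h ν₁ ε) p w • ν p) := by
  have hh := ((s17_diff (s17_f_cd H p)).hasFDerivAt.add
    ((s17_diff (s17_r_cd H hHK hκ p)).hasFDerivAt.smul (s17_diff (s17_n_cd H p)).hasFDerivAt))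
  have h2 : fderiv ℝ (Cf f ν h ν₁ ε) p = _ := hh.fderiv
  rw [h2]
  simp

lemma s17_Cu (H : AdaptedPureFrontal f ν h ν₁)
    (hHK : ∀ p : ℝ × ℝ, Hm f ν h ν₁ p ^ 2 - Kg f ν h ν₁ p > 0)
    (hκ : ∀ p : ℝ × ℝ, kap f ν h ν₁ ε p ≠ 0) (p : ℝ × ℝ) :
    pu (Cf f ν h ν₁ ε) p = pu f p + (rho f ν h ν₁ ε p • pu ν p
      + pu (rho f ν h ν₁ ε) p • ν p) := s17_Cd H hHK hκ p _

lemma s17_Cv (H : AdaptedPureFrontal f ν h ν₁)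
    (hHK : ∀ p : ℝ × ℝ, Hm f ν h ν₁ p ^ 2 - Kg f ν h ν₁ p > 0)
    (hκ : ∀ p : ℝ × ℝ, kap f ν h ν₁ ε p ≠ 0) (p : ℝ × ℝ) :
    pv (Cf f ν h ν₁ ε) p = pv f p + (rho f ν h ν₁ ε p • pv ν p
      + pv (rho f ν h ν₁ ε) p • ν p) := s17_Cd H hHK hκ p _

lemma s17_rd (H : AdaptedPureFrontal f ν h ν₁)
    (hHK : ∀ p : ℝ × ℝ, Hm f ν h ν₁ p ^ 2 - Kg f ν h ν₁ p > 0)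
    (hκ : ∀ p : ℝ × ℝ, kap f ν h ν₁ ε p ≠ 0) (p w : ℝ × ℝ) :
    fderiv ℝ (rho f ν h ν₁ ε) p w
      = - (fderiv ℝ (kap f ν h ν₁ ε) p w / kap f ν h ν₁ ε p ^ 2) := by
  have hk := (s17_diff (s17_k_cd (ε := ε) H hHK p)).hasFDerivAt
  have h1 := (hasDerivAt_inv (hκ p)).comp_hasFDerivAt p hk
  have h2 : fderiv ℝ (rho f ν h ν₁ ε) p = _ := h1.fderiv
  rw [h2]
  simp
  field_simp

lemma s17_VDr (H : AdaptedPureFrontal f ν h ν₁)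
    (hHK : ∀ p : ℝ × ℝ, Hm f ν h ν₁ p ^ 2 - Kg f ν h ν₁ p > 0)
    (hκ : ∀ p : ℝ × ℝ, kap f ν h ν₁ ε p ≠ 0) (p : ℝ × ℝ) :
    VD f ν h ν₁ ε (rho f ν h ν₁ ε) p
      = - (VD f ν h ν₁ ε (kap f ν h ν₁ ε) p / kap f ν h ν₁ ε p ^ 2) := by
  unfold VD pu pv
  rw [s17_rd H hHK hκ, s17_rd H hHK hκ]
  simp only [smul_eq_mul]
  ring

lemma s17_Cv0 (H : AdaptedPureFrontal f ν h ν₁) (hε : ε = 1 ∨ ε = -1)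
    (hHK : ∀ p : ℝ × ℝ, Hm f ν h ν₁ p ^ 2 - Kg f ν h ν₁ p > 0)
    (hκ : ∀ p : ℝ × ℝ, kap f ν h ν₁ ε p ≠ 0) (u : ℝ)
    (hrc : rc f ν h ν₁ u = 0) : pv (Cf f ν h ν₁ ε) (u, 0) = 0 := by
  have h1 : pv (rho f ν h ν₁ ε) (u, 0) = _ := s17_rd H hHK hκ (u, 0) (0, 1)
  have h2 := s17_kv (ε := ε) H hε hHK u hrc
  unfold pv at h2
  rw [h2] at h1
  rw [s17_Cv H hHK hκ, h1, H.fv_eq, H.νv_eq]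
  simp

lemma s17_VDC (H : AdaptedPureFrontal f ν h ν₁) (hε : ε = 1 ∨ ε = -1)
    (hHK : ∀ p : ℝ × ℝ, Hm f ν h ν₁ p ^ 2 - Kg f ν h ν₁ p > 0)
    (hκ : ∀ p : ℝ × ℝ, kap f ν h ν₁ ε p ≠ 0) (p : ℝ × ℝ) :
    VD f ν h ν₁ ε (Cf f ν h ν₁ ε) p = VD f ν h ν₁ ε (rho f ν h ν₁ ε) p • ν p := by
  have hz : (V1c f ν h ν₁ ε p • pu ν p + V2c f ν h ν₁ ε p • pv ν p)
      + kap f ν h ν₁ ε p • (V1c f ν h ν₁ ε p • pu f p + V2c f ν h ν₁ ε p • pv f p) = 0 := by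
    have keq := s17_keq (ε := ε) H hε hHK p
    apply s17_zero (H.indep p)
    · simp only [s17_add_dot, s17_smul_dot, H.fv_eq p]
      rw [s17_dot_comm (pv ν p), s17_funv H, s17_dot_comm (h p) (pu f p),
        s17_dot_comm (pu ν p) (pu f p)]
      have e1 : dot3 (pu f p) (pu ν p) = - Lt f ν p := by unfold Lt; ring
      have e2 : dot3 (pu f p) (pu f p) = Et f p := rfl
      have e3 : dot3 (pu f p) (h p) = Ft f h p := rfl
      rw [e1, e2, e3]; unfold V1c V2c; ring
    · simp only [s17_add_dot, s17_smul_dot, H.fv_eq p]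
      rw [s17_dot_comm (pv ν p), s17_hnv H, s17_dot_comm (pu ν p) (h p)]
      have e1 : dot3 (h p) (pu ν p) = - Mt h ν p := by unfold Mt; ring
      have e2 : dot3 (h p) (h p) = Gt h p := rfl
      have e3 : dot3 (pu f p) (h p) = Ft f h p := rfl
      rw [e1, e2, e3]; unfold V1c V2c; linear_combination - p.2 * keq
    · simp only [s17_add_dot, s17_smul_dot, H.orth_fu_ν p, H.orth_fv_ν p, s17_nun H p, s17_nvn H p]
      ring
  have hrk : rho f ν h ν₁ ε p * kap f ν h ν₁ ε p = 1 := inv_mul_cancel₀ (hκ p)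
  have hz2 := congrArg (fun z => rho f ν h ν₁ ε p • z) hz
  simp only [smul_add, smul_zero, ← mul_smul, hrk] at hz2
  unfold VD
  rw [s17_Cu H hHK hκ, s17_Cv H hHK hκ]
  rw [← sub_eq_zero, ← hz2]
  simp only [smul_eq_mul]
  ext i
  simp
  linear_combination - (V1c f ν h ν₁ ε p * pu f p i + V2c f ν h ν₁ ε p * pv f p i) * hrk

lemma s17_xn (H : AdaptedPureFrontal f ν h ν₁) (p : ℝ × ℝ) : dot3 (xj f ν h ν₁ ε p) (ν p) = 0 := by
  unfold xj
  simp only [s17_add_dot, s17_smul_dot, s17_hn H p, H.orth_fu_ν p]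
  ring

lemma s17_xCu (H : AdaptedPureFrontal f ν h ν₁)
    (hHK : ∀ p : ℝ × ℝ, Hm f ν h ν₁ p ^ 2 - Kg f ν h ν₁ p > 0)
    (hκ : ∀ p : ℝ × ℝ, kap f ν h ν₁ ε p ≠ 0) (p : ℝ × ℝ) :
    dot3 (xj f ν h ν₁ ε p) (pu (Cf f ν h ν₁ ε) p) = 0 := by
  have hrk : rho f ν h ν₁ ε p * kap f ν h ν₁ ε p = 1 := inv_mul_cancel₀ (hκ p)
  rw [s17_Cu H hHK hκ, s17_dot_add, s17_dot_add, s17_dot_smul, s17_dot_smul, s17_xn H]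
  unfold xj
  simp only [s17_add_dot, s17_smul_dot]
  rw [s17_dot_comm (h p) (pu f p)]
  have e1 : dot3 (pu f p) (pu ν p) = - Lt f ν p := by unfold Lt; ring
  have e1 : dot3 (h p) (pu ν p) = - Mt h ν p := by unfold Mt; ring
  have e2 : dot3 (pu f p) (pu f p) = Et f p := rfl
  have e3 : dot3 (pu f p) (h p) = Ft f h p := rfl
  simp only [*]
  linear_combination (Mt h ν p * Et f p - Lt f ν p * Ft f h p) * hrk

lemma s17_xCv (H : AdaptedPureFrontal f ν h ν₁) (hε : ε = 1 ∨ ε = -1)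
    (hHK : ∀ p : ℝ × ℝ, Hm f ν h ν₁ p ^ 2 - Kg f ν h ν₁ p > 0)
    (hκ : ∀ p : ℝ × ℝ, kap f ν h ν₁ ε p ≠ 0) (p : ℝ × ℝ) :
    dot3 (xj f ν h ν₁ ε p) (pv (Cf f ν h ν₁ ε) p) = 0 := by
  have hrk : rho f ν h ν₁ ε p * kap f ν h ν₁ ε p = 1 := inv_mul_cancel₀ (hκ p)
  have keq := s17_keq (ε := ε) H hε hHK p
  rw [s17_Cv H hHK hκ, s17_dot_add, s17_dot_add, s17_dot_smul, s17_dot_smul, s17_xn H, H.fv_eq,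
    s17_dot_smul]
  unfold xj
  simp only [s17_add_dot, s17_smul_dot]
  rw [s17_funv H, s17_hnv H]
  have e2 : dot3 (h p) (h p) = Gt h p := rfl
  have e3 : dot3 (pu f p) (h p) = Ft f h p := rfl
  simp only [e2, e3]
  generalize kap f ν h ν₁ ε p = k at *
  generalize rho f ν h ν₁ ε p = r at *
  generalize Mt h ν p = M at *
  generalize Lt f ν p = L at *
  generalize Et f p = E at *
  generalize Ft f h p = F at *
  generalize Gt h p = G at *
  generalize Nt1 h ν₁ p = N at *
  linear_combination - r * p.2 * keq - p.2 * (-(M - k * F) * F + (L - k * E) * G) * hrk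

lemma s17_ee (p : ℝ × ℝ) (hx : xj f ν h ν₁ ε p ≠ 0) :
    dot3 (ej f ν h ν₁ ε p) (ej f ν h ν₁ ε p) = 1 := by
  have hp := s17_dot_pos hx
  have hs := Real.sqrt_pos.2 hp
  have h2 := Real.sq_sqrt hp.le
  unfold ej norm3
  rw [s17_dot_smul, s17_smul_dot]
  field_simp
  linarith

lemma s17_ev0 (H : AdaptedPureFrontal f ν h ν₁) (hε : ε = 1 ∨ ε = -1)
    (hHK : ∀ p : ℝ × ℝ, Hm f ν h ν₁ p ^ 2 - Kg f ν h ν₁ p > 0)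
    (hκ : ∀ p : ℝ × ℝ, kap f ν h ν₁ ε p ≠ 0) (u : ℝ)
    (hrc : rc f ν h ν₁ u = 0) (hx : ∀ᶠ p in nhds ((u, 0) : ℝ × ℝ), xj f ν h ν₁ ε p ≠ 0)
    (hM : Mt h ν (u, 0) ≠ 0) :
    pv (ej f ν h ν₁ ε) (u, 0) = 0 := by
  have hx0 := hx.self_of_nhds
  have de := s17_diff (s17_e_cd (ε := ε) H hHK (u, 0) hx0)
  have dn := s17_diff (s17_n_cd H (u, 0))
  have cC := s17_C_cd (ε := ε) H hHK hκ (u, 0)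
  have hCv := s17_Cv0 H hε hHK hκ u hrc
  -- orthogonality to ν
  have o1 := s17_pv_dot (ej f ν h ν₁ ε) ν (u, 0) de dn
  have z1 : (fun q => dot3 (ej f ν h ν₁ ε q) (ν q)) = fun _ => 0 := by
    funext q; unfold ej; rw [s17_smul_dot, s17_xn H, mul_zero]
  have hnv : pv ν (u, 0) = 0 := by rw [H.νv_eq]; simp
  rw [z1, s17_pv_const, hnv, s17_dot_zero, add_zero] at o1
  -- orthogonality to e
  have o2 := s17_pv_dot (ej f ν h ν₁ ε) (ej f ν h ν₁ ε) (u, 0) de de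
  have z2 : (fun q => dot3 (ej f ν h ν₁ ε q) (ej f ν h ν₁ ε q)) =ᶠ[nhds (u, 0)] fun _ => 1 := by
    filter_upwards [hx] with q hq using s17_ee q hq
  rw [s17_pv_congr z2, s17_pv_const, s17_dot_comm (ej f ν h ν₁ ε (u, 0))] at o2
  have o2' : dot3 (pv (ej f ν h ν₁ ε) (u, 0)) (ej f ν h ν₁ ε (u, 0)) = 0 := by linarith
  have o3 : dot3 (pv (ej f ν h ν₁ ε) (u, 0)) (xj f ν h ν₁ ε (u, 0)) = 0 := by
    rw [show ej f ν h ν₁ ε (u, 0) = (norm3 (xj f ν h ν₁ ε (u, 0)))⁻¹ • xj f ν h ν₁ ε (u, 0) from rfl,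
      s17_dot_smul] at o2'
    refine (mul_eq_zero.1 o2').resolve_left ?_
    exact inv_ne_zero (Real.sqrt_pos.2 (s17_dot_pos hx0)).ne'
  -- orthogonality to C_u
  have o4 := s17_pv_dot (ej f ν h ν₁ ε) (pu (Cf f ν h ν₁ ε)) (u, 0) de (s17_diff (s17_pu_cd cC))
  have o5 := s17_pu_dot (ej f ν h ν₁ ε) (pv (Cf f ν h ν₁ ε)) (u, 0) de (s17_diff (s17_pv_cd cC))
  have z4 : (fun q => dot3 (ej f ν h ν₁ ε q) (pu (Cf f ν h ν₁ ε) q)) = fun _ => 0 := by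
    funext q; unfold ej; rw [s17_smul_dot, s17_xCu H hHK hκ, mul_zero]
  have z5 : (fun q => dot3 (ej f ν h ν₁ ε q) (pv (Cf f ν h ν₁ ε) q)) = fun _ => 0 := by
    funext q; unfold ej; rw [s17_smul_dot, s17_xCv H hε hHK hκ, mul_zero]
  rw [z4, s17_pv_const, s17_symm cC] at o4
  rw [z5, s17_pu_const, hCv, s17_dot_zero, zero_add] at o5
  rw [← o5, add_zero] at o4
  rw [s17_Cu H hHK hκ, s17_dot_add, s17_dot_add, s17_dot_smul, s17_dot_smul, ← o1] at o4
  have w := congrArg (dot3 (pv (ej f ν h ν₁ ε) (u, 0))) (s17_wein H u)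
  rw [s17_dot_add, s17_dot_add, s17_dot_smul, s17_dot_smul, s17_dot_zero] at w
  have hrk : rho f ν h ν₁ ε (u, 0) * kap f ν h ν₁ ε (u, 0) = 1 := inv_mul_cancel₀ (hκ _)
  have E1 : Et f (u, 0) = 1 := H.adapted_fu u
  have F0 : Ft f h (u, 0) = 0 := H.adapted_fu_h u
  unfold xj at o3
  rw [s17_dot_add, s17_dot_smul, s17_dot_smul, E1, F0] at o3
  generalize pv (ej f ν h ν₁ ε) (u, 0) = y at *
  have hne : Mt h ν (u, 0) ^ 2 + (Lt f ν (u, 0) - kap f ν h ν₁ ε (u, 0)) ^ 2 ≠ 0 := by positivity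
  have o6 : dot3 y (pu f (u, 0)) * (kap f ν h ν₁ ε (u, 0) - Lt f ν (u, 0))
      - dot3 y (h (u, 0)) * Mt h ν (u, 0) = 0 := by
    linear_combination -kap f ν h ν₁ ε (u, 0) * o4 - dot3 y (pu ν (u, 0)) * hrk - w
  apply s17_zero (H.indep (u, 0)) ?_ ?_ o1.symm
  · apply (mul_eq_zero.1 (?_ : _ * dot3 y (pu f (u, 0)) = 0)).resolve_left hne
    linear_combination - Mt h ν (u, 0) * o3 - (Lt f ν (u, 0) - kap f ν h ν₁ ε (u, 0)) * o6
  · apply (mul_eq_zero.1 (?_ : _ * dot3 y (h (u, 0)) = 0)).resolve_left hne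
    linear_combination (Lt f ν (u, 0) - kap f ν h ν₁ ε (u, 0)) * o3 - Mt h ν (u, 0) * o6

/-- determinant of the first fundamental form of the focal surface -/
lemma s17_den (H : AdaptedPureFrontal f ν h ν₁) (hε : ε = 1 ∨ ε = -1)
    (hHK : ∀ p : ℝ × ℝ, Hm f ν h ν₁ p ^ 2 - Kg f ν h ν₁ p > 0)
    (hκ : ∀ p : ℝ × ℝ, kap f ν h ν₁ ε p ≠ 0) (p : ℝ × ℝ) :
    V2c f ν h ν₁ ε p ^ 2 * (EC f ν h ν₁ ε p * GC f ν h ν₁ ε p - FC f ν h ν₁ ε p ^ 2)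
      = VD f ν h ν₁ ε (rho f ν h ν₁ ε) p ^ 2 *
        (EC f ν h ν₁ ε p - dot3 (pu (Cf f ν h ν₁ ε) p) (ν p) ^ 2) := by
  have hV := s17_VDC H hε hHK hκ p
  unfold VD at hV
  have hn := H.unit_ν p
  have e1 := congrArg (dot3 (pu (Cf f ν h ν₁ ε) p)) hV
  have e2 := congrArg (fun z => dot3 z z) hV
  simp only [s17_dot_add, s17_dot_smul, s17_add_dot, s17_smul_dot, hn] at e1 e2
  unfold EC FC GC VD
  rw [s17_dot_comm (pv (Cf f ν h ν₁ ε) p) (pu (Cf f ν h ν₁ ε) p)] at e2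
  generalize pu (Cf f ν h ν₁ ε) p = a at *
  generalize pv (Cf f ν h ν₁ ε) p = b at *
  generalize (V1c f ν h ν₁ ε p • pu (rho f ν h ν₁ ε) p + V2c f ν h ν₁ ε p • pv (rho f ν h ν₁ ε) p)
    = w at *
  generalize V1c f ν h ν₁ ε p = x at *
  generalize V2c f ν h ν₁ ε p = y at *
  linear_combination dot3 a a * e2 - (x * dot3 a a + y * dot3 a b + w * dot3 a (ν p)) * e1

lemma s17_T0 (H : AdaptedPureFrontal f ν h ν₁)
    (hHK : ∀ p : ℝ × ℝ, Hm f ν h ν₁ p ^ 2 - Kg f ν h ν₁ p > 0)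
    (hκ : ∀ p : ℝ × ℝ, kap f ν h ν₁ ε p ≠ 0) (u : ℝ) (hM : Mt h ν (u, 0) ≠ 0) :
    0 < EC f ν h ν₁ ε (u, 0) - dot3 (pu (Cf f ν h ν₁ ε) (u, 0)) (ν (u, 0)) ^ 2 := by
  have hw := eq_neg_of_add_eq_zero_left (s17_wein H u)
  have hr : rho f ν h ν₁ ε (u, 0) ≠ 0 := inv_ne_zero (hκ _)
  have a1 := H.adapted_fu u
  have a2 := H.adapted_h u
  have a3 := H.adapted_fu_h u
  have a4 := H.adapted_h_ν u
  have a5 := H.orth_fu_ν (u, 0)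
  have a6 := H.unit_ν (u, 0)
  have key : EC f ν h ν₁ ε (u, 0) - dot3 (pu (Cf f ν h ν₁ ε) (u, 0)) (ν (u, 0)) ^ 2
    = (1 - rho f ν h ν₁ ε (u, 0) * Lt f ν (u, 0)) ^ 2
      + (rho f ν h ν₁ ε (u, 0) * Mt h ν (u, 0)) ^ 2 := by
    have hc : pu (Cf f ν h ν₁ ε) (u, 0) = (1 - rho f ν h ν₁ ε (u, 0) * Lt f ν (u, 0)) • pu f (u, 0)
      + (-(rho f ν h ν₁ ε (u, 0) * Mt h ν (u, 0)) • h (u, 0)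
        + pu (rho f ν h ν₁ ε) (u, 0) • ν (u, 0)) := by
      rw [s17_Cu H hHK hκ, hw]
      ext i; simp; ring
    unfold EC
    rw [hc]
    simp only [s17_dot_add, s17_dot_smul, s17_add_dot, s17_smul_dot,
      s17_dot_comm (h (u, 0)) (pu f (u, 0)), s17_dot_comm (ν (u, 0)) (pu f (u, 0)),
      s17_dot_comm (ν (u, 0)) (h (u, 0)), a1, a2, a3, a4, a5, a6]
    ring
  rw [key]
  positivity

end s17

lemma s17_quot {n d A c v : ℝ} (hc : 0 < c) (hA : 0 ≤ A) (hn : |n| ≤ A * v ^ 2)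
    (hd : c * v ^ 2 ≤ d) : |n / d| ≤ A / c := by
  by_cases hd0 : d = 0
  · rw [hd0, div_zero, abs_zero]; positivity
  have hdp : 0 < d := lt_of_le_of_ne (le_trans (by positivity) hd) (Ne.symm hd0)
  rw [abs_div, abs_of_pos hdp, div_le_div_iff₀ hdp hc]
  nlinarith

lemma s17_gram_nn (a b : R3) : 0 ≤ dot3 a a * dot3 b b - dot3 a b ^ 2 := by
  have : dot3 a a * dot3 b b - dot3 a b ^ 2 = (a 0 * b 1 - a 1 * b 0) ^ 2
    + (a 0 * b 2 - a 2 * b 0) ^ 2 + (a 1 * b 2 - a 2 * b 1) ^ 2 := by unfold dot3; ring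
  rw [this]; positivity

lemma s17_num {a b c d : R3} {B v : ℝ} (hB : 0 ≤ B) (ha : ‖a‖ ≤ B) (hb : ‖b‖ ≤ B * |v|)
    (hc : ‖c‖ ≤ B) (hd : ‖d‖ ≤ B * |v|) :
    |(-dot3 a c) * (-dot3 b d) - (-dot3 b c) ^ 2| ≤ 18 * B ^ 4 * v ^ 2 ∧
    |dot3 a a * (-dot3 b d) - 2 * dot3 a b * (-dot3 b c) + dot3 b b * (-dot3 a c)|
      ≤ 36 * B ^ 4 * v ^ 2 := by
  have hBv : 0 ≤ B * |v| := by positivity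
  have gen : ∀ {x y : R3} {s t : ℝ}, 0 ≤ s → ‖x‖ ≤ s → ‖y‖ ≤ t → |dot3 x y| ≤ 3 * (s * t) := by
    intro x y s t hs h1 h2
    have := mul_le_mul h1 h2 (norm_nonneg _) hs
    linarith [s17_dot_le x y]
  have pr : ∀ {x y s t : ℝ}, |x| ≤ s → |y| ≤ t → |x * y| ≤ s * t := by
    intro x y s t h1 h2
    rw [abs_mul]
    exact mul_le_mul h1 h2 (abs_nonneg _) (le_trans (abs_nonneg _) h1)
  have v2 : |v| ^ 2 = v ^ 2 := sq_abs v
  have p1 := pr (gen hB ha hc) (gen hBv hb hd)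
  have p2 := pr (gen hBv hb hc) (gen hBv hb hc)
  have p3 := pr (gen hB ha ha) (gen hBv hb hd)
  have p4 := pr (gen hB ha hb) (gen hBv hb hc)
  have p5 := pr (gen hBv hb hb) (gen hB ha hc)
  have q1 : 3 * (B * B) * (3 * (B * |v| * (B * |v|))) = 9 * B ^ 4 * v ^ 2 := by rw [← v2]; ring
  have q2 : 3 * (B * |v| * B) * (3 * (B * |v| * B)) = 9 * B ^ 4 * v ^ 2 := by rw [← v2]; ring
  have q4 : 3 * (B * (B * |v|)) * (3 * (B * |v| * B)) = 9 * B ^ 4 * v ^ 2 := by rw [← v2]; ring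
  have q5 : 3 * (B * |v| * (B * |v|)) * (3 * (B * B)) = 9 * B ^ 4 * v ^ 2 := by rw [← v2]; ring
  rw [q1] at p1 p3
  rw [q2] at p2
  rw [q4] at p4
  rw [q5] at p5
  rw [abs_le] at p1 p2 p3 p4 p5
  obtain ⟨p1, p1'⟩ := p1
  obtain ⟨p2, p2'⟩ := p2
  obtain ⟨p3, p3'⟩ := p3
  obtain ⟨p4, p4'⟩ := p4
  obtain ⟨p5, p5'⟩ := p5
  constructor <;> rw [abs_le] <;> constructor <;> nlinarith

/-- if r_c ≡ 0 along the singular curve and 0 is a first order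
V_j-ridge point, then near 0 the singular set of C_j is {v = 0}, it consists of
pure-frontal singular points of C_j, and the Gaussian and mean curvature of C_j are
bounded on the regular set near 0. -/
theorem stmt_17 (f ν h ν₁ : ℝ × ℝ → R3) (H : AdaptedPureFrontal f ν h ν₁)
    (ε : ℝ) (hε : ε = 1 ∨ ε = -1)
    (hHK : ∀ p : ℝ × ℝ, Hm f ν h ν₁ p ^ 2 - Kg f ν h ν₁ p > 0)
    (hκ : ∀ p : ℝ × ℝ, kap f ν h ν₁ ε p ≠ 0)
    (hx : ∀ᶠ p in nhds (0 : ℝ × ℝ), xj f ν h ν₁ ε p ≠ 0)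
    (hkt : kt h ν 0 ≠ 0)
    (hrc : ∀ᶠ u in nhds (0 : ℝ), rc f ν h ν₁ u = 0)
    (hridge : VD f ν h ν₁ ε (kap f ν h ν₁ ε) 0 = 0)
    (hridge1 : VD f ν h ν₁ ε (VD f ν h ν₁ ε (kap f ν h ν₁ ε)) 0 ≠ 0) :
    ∃ U ∈ nhds (0 : ℝ × ℝ),
      (∀ p ∈ U, (VD f ν h ν₁ ε (rho f ν h ν₁ ε) p = 0 ↔ p.2 = 0)) ∧
      (∀ p ∈ U, p.2 = 0 → VD f ν h ν₁ ε (ej f ν h ν₁ ε) p = 0) ∧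
      ∃ M : ℝ, ∀ p ∈ U, rankAt (Cf f ν h ν₁ ε) p = 2 →
        |KC f ν h ν₁ ε p| ≤ M ∧ |HC f ν h ν₁ ε p| ≤ M := by
  have hxx := hx.eventually_nhds
  have ev_rc : ∀ᶠ p in nhds (0 : ℝ × ℝ), rc f ν h ν₁ p.1 = 0 :=
    (continuous_fst.tendsto (0 : ℝ × ℝ)).eventually hrc
  have tax : Tendsto (fun p : ℝ × ℝ => ((p.1, 0) : ℝ × ℝ)) (nhds 0) (nhds 0) :=
    (Continuous.prodMk continuous_fst continuous_const).tendsto (0 : ℝ × ℝ)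
  have ev_x := tax.eventually hxx
  have hM0 : Mt h ν (0, 0) ≠ 0 := hkt
  have ev_M := tax.eventually ((s17_M_cd H 0).continuousAt.eventually_ne hM0)
  have ev_ev : ∀ᶠ p in nhds (0 : ℝ × ℝ), pv (ej f ν h ν₁ ε) (p.1, 0) = 0 := by
    filter_upwards [ev_rc, ev_x, ev_M] with p h1 h2 h3
    exact s17_ev0 H hε hHK hκ p.1 h1 h2 h3
  have ev_Cv : ∀ᶠ p in nhds (0 : ℝ × ℝ), pv (Cf f ν h ν₁ ε) (p.1, 0) = 0 := by
    filter_upwards [ev_rc] with p h1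
    exact s17_Cv0 H hε hHK hκ p.1 h1
  have ev_k : ∀ᶠ p in nhds (0 : ℝ × ℝ), VD f ν h ν₁ ε (kap f ν h ν₁ ε) (p.1, 0) = 0 := by
    filter_upwards [ev_rc] with p h1
    have := s17_kv (ε := ε) H hε hHK p.1 h1
    simp [VD, V1c, this]
  have hk1 : pv (VD f ν h ν₁ ε (kap f ν h ν₁ ε)) 0 ≠ 0 := by
    intro h0
    apply hridge1
    rw [VD, h0]
    simp [V1c]
  have cdk := s17_k_cd (ε := ε) H hHK 0
  have cdC := s17_C_cd (ε := ε) H hHK hκ 0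
  have cde := s17_e_cd (ε := ε) H hHK 0 hx.self_of_nhds
  obtain ⟨c, hc, lowk⟩ := s17_low (s17_VD_cd (ε := ε) H hHK 0 cdk) ev_k hk1
  obtain ⟨K1, hK1, upC⟩ := s17_up (s17_pv_cd cdC) ev_Cv
  obtain ⟨K2, hK2, upe⟩ := s17_up (s17_pv_cd cde) ev_ev
  obtain ⟨A1, hA1, bC⟩ := s17_bd (s17_pu_cd cdC).continuousAt
  obtain ⟨A2, hA2, be⟩ := s17_bd (s17_pu_cd cde).continuousAt
  obtain ⟨k0, hk0, bk⟩ := s17_bd cdk.continuousAt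
  obtain ⟨Q, hQ, bQ⟩ := s17_bd (s17_V2_cd (ε := ε) H hHK 0).continuousAt
  have hT0 := s17_T0 (ε := ε) H hHK hκ 0 hM0
  have hTc : ContinuousAt (fun p => EC f ν h ν₁ ε p - dot3 (pu (Cf f ν h ν₁ ε) p) (ν p) ^ 2) 0 :=
    ((s17_dot_cd (s17_pu_cd cdC) (s17_pu_cd cdC)).sub
      ((s17_dot_cd (s17_pu_cd cdC) (s17_n_cd H 0)).pow 2)).continuousAt
  set T0 := EC f ν h ν₁ ε (0, 0) - dot3 (pu (Cf f ν h ν₁ ε) (0, 0)) (ν (0, 0)) ^ 2 with hT0d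
  have ev_T : ∀ᶠ p in nhds (0 : ℝ × ℝ),
      T0 / 2 < EC f ν h ν₁ ε p - dot3 (pu (Cf f ν h ν₁ ε) p) (ν p) ^ 2 :=
    hTc.eventually_const_lt (half_lt_self hT0)
  set B := K1 + K2 + A1 + A2
  have hB : 0 ≤ B := by positivity
  set m := c ^ 2 * (T0 / 2) / (k0 ^ 4 * Q ^ 2) with hm
  have hmp : 0 < m := by positivity
  refine ⟨_, Filter.inter_mem (Filter.inter_mem (Filter.inter_mem ev_k lowk)
    (Filter.inter_mem ev_ev upC)) (Filter.inter_mem (Filter.inter_mem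
      (Filter.inter_mem upe bC) (Filter.inter_mem be bk)) (Filter.inter_mem bQ ev_T)), ?_, ?_, ?_⟩
  · rintro ⟨u, v⟩ ⟨⟨⟨g1, g2⟩, -⟩, -⟩
    simp only [Set.mem_ofPred_eq] at g1 g2
    rw [s17_VDr H hHK hκ]
    constructor
    · intro h0
      have h1 : VD f ν h ν₁ ε (kap f ν h ν₁ ε) (u, v) = 0 := by
        have := hκ (u, v)
        simpa [this] using h0
      rw [h1, abs_zero] at g2
      have : |v| ≤ 0 := by
        by_contra hv
        push Not at hv
        have := mul_pos hc hv
        linarith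
      exact abs_nonpos_iff.1 this
    · intro hv
      simp only at hv
      subst hv
      rw [g1]; simp
  · rintro ⟨u, v⟩ ⟨⟨-, ⟨g1, -⟩⟩, -⟩ hv
    simp only [Set.mem_ofPred_eq] at g1 hv
    subst hv
    simp [VD, V1c, g1]
  · refine ⟨36 * B ^ 4 / m, ?_⟩
    rintro p ⟨⟨⟨-, g2⟩, ⟨-, g4⟩⟩, ⟨⟨⟨g5, g6⟩, ⟨g7, g8⟩⟩, ⟨g9, g10⟩⟩⟩ -
    simp only [Set.mem_ofPred_eq] at g2 g4 g5 g6 g7 g8 g9 g10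
    have av := abs_nonneg p.2
    obtain ⟨n1, n2⟩ := s17_num (v := p.2) hB (le_trans g6 (by linarith : A1 ≤ B))
      (le_trans g4 (mul_le_mul_of_nonneg_right (by linarith : K1 ≤ B) av))
      (le_trans g7 (by linarith : A2 ≤ B))
      (le_trans g5 (mul_le_mul_of_nonneg_right (by linarith : K2 ≤ B) av))
    have hden := s17_den H hε hHK hκ p
    have hnn : 0 ≤ EC f ν h ν₁ ε p * GC f ν h ν₁ ε p - FC f ν h ν₁ ε p ^ 2 := s17_gram_nn _ _
    have hd : m * p.2 ^ 2 ≤ EC f ν h ν₁ ε p * GC f ν h ν₁ ε p - FC f ν h ν₁ ε p ^ 2 := by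
      have hkp := hκ p
      have w1 : c ^ 2 * p.2 ^ 2 / k0 ^ 4 ≤ VD f ν h ν₁ ε (rho f ν h ν₁ ε) p ^ 2 := by
        rw [s17_VDr H hHK hκ, neg_sq, div_pow]
        apply div_le_div₀ (sq_nonneg _)
        · rw [← sq_abs (VD _ _ _ _ _ _ _), ← sq_abs p.2, ← mul_pow]
          exact pow_le_pow_left₀ (by positivity) g2 2
        · positivity
        · rw [← pow_mul, ← (show Even 4 by decide).pow_abs]
          exact pow_le_pow_left₀ (abs_nonneg _) g8 4
      have w2 : V2c f ν h ν₁ ε p ^ 2 ≤ Q ^ 2 := by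
        rw [← sq_abs]
        exact pow_le_pow_left₀ (abs_nonneg _) g9 2
      have w3 := mul_le_mul w1 g10.le (by positivity) (sq_nonneg _)
      rw [← hden] at w3
      have w4 := mul_le_mul_of_nonneg_right w2 hnn
      have w5 : m * p.2 ^ 2 = c ^ 2 * p.2 ^ 2 / k0 ^ 4 * (T0 / 2) / Q ^ 2 := by
        rw [hm]; field_simp
      rw [w5, div_le_iff₀ (by positivity)]
      linarith
    constructor
    · refine s17_quot (v := p.2) hmp (by positivity) (le_trans n1 ?_) hd
      have : 0 ≤ B ^ 4 * p.2 ^ 2 := by positivity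
      linarith
    · refine s17_quot (v := p.2) hmp (by positivity) n2 ?_
      have : 0 ≤ m * p.2 ^ 2 := by positivity
      linarith
end
end

section
/- Under the adapted pure-frontal setup with focal data, assume κ_t(0) ≠ 0 and r_c(0) ≠ 0 (so f has a 5/2-cuspidal edge at 0). Then for j = 1,2 the focal surface C_j is an immersion at 0, and its Gaussian curvature at 0, computed with the unit normal e_j = x_j/‖x_j‖ as K^{C_j} = (L^C N^C − (M^C)²)/(E^C G^C − (F^C)²) with E^C = ⟨(C_j)_u,(C_j)_u⟩, F^C = ⟨(C_j)_u,(C_j)_v⟩, G^C = ⟨(C_j)_v,(C_j)_v⟩, L^C = −⟨(C_j)_u,(e_j)_u⟩, M^C = −⟨(C_j)_v,(e_j)_u⟩, N^C = −⟨(C_j)_v,(e_j)_v⟩, satisfies K^{C_j}(0) = −κ_t(0)²·κ_j(0)⁴/(κ_t(0)² + (κ_ν(0)−κ_j(0))²)²; in particular K^{C_j}(0) < 0. -/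
open Filter

noncomputable section

theorem aux_dot_fd {a b : ℝ × ℝ → R3} {p : ℝ × ℝ} (ha : DifferentiableAt ℝ a p)
    (hb : DifferentiableAt ℝ b p) :
    DifferentiableAt ℝ (fun q => dot3 (a q) (b q)) p ∧
    ∀ w, fderiv ℝ (fun q => dot3 (a q) (b q)) p w =
      dot3 (fderiv ℝ a p w) (b p) + dot3 (a p) (fderiv ℝ b p w) := by
  have h1 := fun i => hasFDerivAt_pi'.1 ha.hasFDerivAt i
  have h2 := fun i => hasFDerivAt_pi'.1 hb.hasFDerivAt i
  have h3 := (((h1 0).mul (h2 0)).add ((h1 1).mul (h2 1))).add ((h1 2).mul (h2 2))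
  have h4 : HasFDerivAt (fun q => dot3 (a q) (b q)) _ p := h3
  refine ⟨h4.differentiableAt, fun w => ?_⟩
  rw [h4.fderiv]
  simp [dot3]
  ring

theorem aux_parseval {a b c : R3} (haa : dot3 a a = 1) (hbb : dot3 b b = 1) (hcc : dot3 c c = 1)
    (hab : dot3 a b = 0) (hac : dot3 a c = 0) (hbc : dot3 b c = 0) (x y : R3) :
    dot3 x y = dot3 x a * dot3 y a + dot3 x b * dot3 y b + dot3 x c * dot3 y c := by
  have hM : (Matrix.of ![a, b, c]) * (Matrix.of ![a, b, c]).transpose = 1 := by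
    simp only [dot3] at *
    ext i j
    fin_cases i <;> fin_cases j <;>
      simp [Matrix.mul_apply, Fin.sum_univ_three] <;> linarith
  have hM2 := mul_eq_one_comm.1 hM
  have key : ∀ i j, a i * a j + b i * b j + c i * c j = if i = j then 1 else 0 := by
    intro i j
    have := congrFun (congrFun hM2 i) j
    simpa [Matrix.mul_apply, Fin.sum_univ_three, Matrix.one_apply] using this
  have k00 := key 0 0
  have k01 := key 0 1
  have k02 := key 0 2
  have k11 := key 1 1
  have k12 := key 1 2
  have k22 := key 2 2
  simp at k00 k01 k02 k11 k12 k22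
  simp only [dot3]
  linear_combination (-(x 0 * y 0)) * k00 - (x 0 * y 1 + x 1 * y 0) * k01
    - (x 0 * y 2 + x 2 * y 0) * k02 - x 1 * y 1 * k11 - (x 1 * y 2 + x 2 * y 1) * k12
    - x 2 * y 2 * k22

theorem aux_diff_dir {g : ℝ × ℝ → R3} (hg : ContDiff ℝ (⊤ : ℕ∞) g) (w p : ℝ × ℝ) :
    DifferentiableAt ℝ (fun q => fderiv ℝ g q w) p := by
  have : ContDiff ℝ 1 (fderiv ℝ g) := (contDiff_infty.1 hg 2).fderiv_right (by norm_num)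
  exact ((this.differentiable (by norm_num)) p).clm_apply (differentiableAt_const _)

/-- mixed partial vanish -/
theorem aux_mixed {g k : ℝ × ℝ → R3} (hg : ContDiff ℝ (⊤ : ℕ∞) g) (hk : ContDiff ℝ (⊤ : ℕ∞) k)
    (he : ∀ p : ℝ × ℝ, pv g p = p.2 • k p) :
    fderiv ℝ (pu g) 0 (0, 1) = 0 := by
  have hc : ContDiff ℝ 1 (fderiv ℝ g) := (contDiff_infty.1 hg 2).fderiv_right (by norm_num)
  have hd := (hc.differentiable (by norm_num)) 0
  have e1 : fderiv ℝ (pu g) 0 (0, 1) = fderiv ℝ (fderiv ℝ g) 0 (0, 1) (1, 0) := by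
    have : HasFDerivAt (pu g) _ 0 := hd.hasFDerivAt.clm_apply (hasFDerivAt_const ((1, 0) : ℝ × ℝ) 0)
    rw [this.fderiv]; simp
  have e2 : fderiv ℝ (pv g) 0 (1, 0) = fderiv ℝ (fderiv ℝ g) 0 (1, 0) (0, 1) := by
    have : HasFDerivAt (pv g) _ 0 := hd.hasFDerivAt.clm_apply (hasFDerivAt_const ((0, 1) : ℝ × ℝ) 0)
    rw [this.fderiv]; simp
  have hs : IsSymmSndFDerivAt ℝ g 0 := by
    apply ((contDiff_infty.1 hg 2).contDiffAt (x := 0)).isSymmSndFDerivAt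
    simp
  rw [e1, hs.eq, ← e2]
  have hkd : DifferentiableAt ℝ k 0 := hk.differentiable (by simp) 0
  have h1 := (hasFDerivAt_snd (𝕜 := ℝ) (p := (0 : ℝ × ℝ))).smul hkd.hasFDerivAt
  have h2 := h1.congr_of_eventuallyEq (f₁ := pv g) (Eventually.of_forall he)
  rw [h2.fderiv]
  simp

theorem aux_hν {f ν h ν₁ : ℝ × ℝ → R3} (H : AdaptedPureFrontal f ν h ν₁) (p : ℝ × ℝ) :
    dot3 (h p) (ν p) = 0 := by
  obtain ⟨u, v⟩ := p
  by_cases hv : v = 0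
  · subst hv; exact H.adapted_h_ν u
  · have h1 := H.orth_fv_ν (u, v)
    rw [H.fv_eq] at h1
    have : v * dot3 (h (u, v)) (ν (u, v)) = 0 := by
      rw [← h1]; simp [dot3]; ring
    exact (mul_eq_zero.1 this).resolve_left hv

/-- at a 5/2-cuspidal edge of f (κ_t(0) ≠ 0, r_c(0) ≠ 0), the focal
surface C_j is an immersion at 0 and its Gaussian curvature there equals
−κ_t²κ_j⁴/(κ_t² + (κ_ν−κ_j)²)² < 0. -/
theorem stmt_18 (f ν h ν₁ : ℝ × ℝ → R3) (H : AdaptedPureFrontal f ν h ν₁)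
    (ε : ℝ) (hε : ε = 1 ∨ ε = -1)
    (hHK : ∀ p : ℝ × ℝ, Hm f ν h ν₁ p ^ 2 - Kg f ν h ν₁ p > 0)
    (hκ : ∀ p : ℝ × ℝ, kap f ν h ν₁ ε p ≠ 0)
    (hx : ∀ᶠ p in nhds (0 : ℝ × ℝ), xj f ν h ν₁ ε p ≠ 0)
    (hkt : kt h ν 0 ≠ 0) (hrc : rc f ν h ν₁ 0 ≠ 0) :
    Function.Injective ⇑(fderiv ℝ (Cf f ν h ν₁ ε) 0) ∧
    KC f ν h ν₁ ε 0 =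
      -((kt h ν 0) ^ 2 * (kap f ν h ν₁ ε 0) ^ 4) /
        ((kt h ν 0) ^ 2 + (kν f ν 0 - kap f ν h ν₁ ε 0) ^ 2) ^ 2 ∧
    KC f ν h ν₁ ε 0 < 0 := by
  have hεsq : ε ^ 2 = 1 := by rcases hε with h | h <;> rw [h] <;> norm_num
  have z0 : ((0 : ℝ), (0 : ℝ)) = (0 : ℝ × ℝ) := rfl
  -- differentiability
  have df : DifferentiableAt ℝ f 0 := H.smooth_f.differentiable (by simp) 0
  have dν : DifferentiableAt ℝ ν 0 := H.smooth_ν.differentiable (by simp) 0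
  have dh : DifferentiableAt ℝ h 0 := H.smooth_h.differentiable (by simp) 0
  have dν₁ : DifferentiableAt ℝ ν₁ 0 := H.smooth_ν₁.differentiable (by simp) 0
  have dfu : DifferentiableAt ℝ (pu f) 0 := aux_diff_dir H.smooth_f (1, 0) 0
  have dνu : DifferentiableAt ℝ (pu ν) 0 := aux_diff_dir H.smooth_ν (1, 0) 0
  obtain ⟨dE, fE⟩ := aux_dot_fd dfu dfu
  obtain ⟨dF, fF⟩ := aux_dot_fd dfu dh
  obtain ⟨dG, fG⟩ := aux_dot_fd dh dh
  obtain ⟨dL, fL⟩ := aux_dot_fd dfu dνu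
  obtain ⟨dM, fM⟩ := aux_dot_fd dh dνu
  obtain ⟨dN, fN⟩ := aux_dot_fd dh dν₁
  have mf : fderiv ℝ (pu f) 0 (0, 1) = 0 := aux_mixed H.smooth_f H.smooth_h H.fv_eq
  have mν : fderiv ℝ (pu ν) 0 (0, 1) = 0 := aux_mixed H.smooth_ν H.smooth_ν₁ H.νv_eq
  have dot0l : ∀ a : R3, dot3 0 a = 0 := fun a => by simp [dot3]
  have dot0r : ∀ a : R3, dot3 a 0 = 0 := fun a => by simp [dot3]
  have comm : ∀ a b : R3, dot3 a b = dot3 b a := fun a b => by simp [dot3]; ring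
  -- orthonormal frame at 0
  have oaa : dot3 (pu f 0) (pu f 0) = 1 := H.adapted_fu 0
  have obb : dot3 (h 0) (h 0) = 1 := H.adapted_h 0
  have occ : dot3 (ν 0) (ν 0) = 1 := H.unit_ν 0
  have oab : dot3 (pu f 0) (h 0) = 0 := H.adapted_fu_h 0
  have oac : dot3 (pu f 0) (ν 0) = 0 := H.orth_fu_ν 0
  have obc : dot3 (h 0) (ν 0) = 0 := H.adapted_h_ν 0
  have pars := aux_parseval oaa obb occ oab oac obc
  -- ν_u ⟂ ν, ν_v = 0
  have νν : dot3 (pu ν 0) (ν 0) = 0 := by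
    have h1 := (aux_dot_fd dν dν).2 (1, 0)
    have h2 : (fun q => dot3 (ν q) (ν q)) = fun _ => (1 : ℝ) := funext H.unit_ν
    rw [h2] at h1
    simp at h1
    have h3 := comm (ν 0) (fderiv ℝ ν 0 (1, 0))
    show dot3 (fderiv ℝ ν 0 (1, 0)) (ν 0) = 0
    linarith
  have νv0 : fderiv ℝ ν 0 (0, 1) = 0 := by
    have := H.νv_eq 0
    simpa [pv] using this
  have fv0 : fderiv ℝ f 0 (0, 1) = 0 := by
    have := H.fv_eq 0
    simpa [pv] using this
  -- values
  have vE : Et f 0 = 1 := oaa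
  have vF : Ft f h 0 = 0 := oab
  have vG : Gt h 0 = 1 := obb
  have hE : HasFDerivAt (Et f) (fderiv ℝ (Et f) 0) 0 := dE.hasFDerivAt
  have hF : HasFDerivAt (Ft f h) (fderiv ℝ (Ft f h) 0) 0 := dF.hasFDerivAt
  have hG : HasFDerivAt (Gt h) (fderiv ℝ (Gt h) 0) 0 := dG.hasFDerivAt
  have dL' : DifferentiableAt ℝ (Lt f ν) 0 := dL.neg
  have dM' : DifferentiableAt ℝ (Mt h ν) 0 := dM.neg
  have dN' : DifferentiableAt ℝ (Nt1 h ν₁) 0 := dN.neg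
  have hL := dL'.hasFDerivAt
  have hM := dM'.hasFDerivAt
  have hN := dN'.hasFDerivAt
  have Ev : fderiv ℝ (Et f) 0 (0, 1) = 0 := by
    rw [show Et f = _ from rfl]
    exact (fE (0, 1)).trans (by rw [mf, dot0l, dot0r, add_zero])
  have Fv : fderiv ℝ (Ft f h) 0 (0, 1) = dot3 (pu f 0) (fderiv ℝ h 0 (0, 1)) :=
    (fF (0, 1)).trans (by rw [mf, dot0l, zero_add])
  have Gv : fderiv ℝ (Gt h) 0 (0, 1) = 2 * dot3 (h 0) (fderiv ℝ h 0 (0, 1)) :=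
    (fG (0, 1)).trans (by rw [comm (fderiv ℝ h 0 (0, 1))]; ring)
  have Lv : fderiv ℝ (Lt f ν) 0 (0, 1) = 0 := by
    have h1 : HasFDerivAt (Lt f ν) _ 0 := dL.hasFDerivAt.neg
    rw [h1.fderiv, neg_apply, fL, mf, mν, dot0l, dot0r]; simp
  have Mv : fderiv ℝ (Mt h ν) 0 (0, 1) = Lt f ν 0 * fderiv ℝ (Ft f h) 0 (0, 1)
      + Mt h ν 0 * (fderiv ℝ (Gt h) 0 (0, 1) / 2) := by
    have h1 : HasFDerivAt (Mt h ν) _ 0 := dM.hasFDerivAt.neg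
    rw [h1.fderiv, neg_apply, fM, mν, dot0r, Fv, Gv,
      pars (fderiv ℝ h 0 (0, 1)) (pu ν 0), νν, comm (fderiv ℝ h 0 (0, 1)),
      comm (fderiv ℝ h 0 (0, 1)), Lt, Mt, comm (pu ν 0), comm (pu ν 0)]
    ring
  -- D = EG - F² and H, K, κ
  have hD : DifferentiableAt ℝ (fun q => Et f q * Gt h q - Ft f h q ^ 2) 0 :=
    (hE.differentiableAt.mul hG.differentiableAt).sub (hF.differentiableAt.pow 2)
  have vD : Et f 0 * Gt h 0 - Ft f h 0 ^ 2 = 1 := by rw [vE, vF, vG]; norm_num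
  have dHm : DifferentiableAt ℝ (Hm f ν h ν₁) 0 := by
    have h2 : 2 * (Et f 0 * Gt h 0 - Ft f h 0 ^ 2) ≠ 0 := by rw [vD]; norm_num
    have := DifferentiableAt.mul
      (((hE.differentiableAt.mul dN').sub ((hF.differentiableAt.const_mul 2).mul dM')).add
        (hG.differentiableAt.mul dL')) ((hD.const_mul 2).inv h2)
    refine this.congr_of_eventuallyEq (Eventually.of_forall fun q => ?_)
    simp [Hm, div_eq_mul_inv]
  have dKg : DifferentiableAt ℝ (Kg f ν h ν₁) 0 := by
    have h2 : Et f 0 * Gt h 0 - Ft f h 0 ^ 2 ≠ 0 := by rw [vD]; norm_num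
    have := DifferentiableAt.mul ((dL'.mul dN').sub (dM'.pow 2)) (hD.inv h2)
    refine this.congr_of_eventuallyEq (Eventually.of_forall fun q => ?_)
    simp [Kg, div_eq_mul_inv]
  have dk : DifferentiableAt ℝ (kap f ν h ν₁ ε) 0 :=
    dHm.add ((((dHm.pow 2).sub dKg).sqrt (hHK 0).ne').const_mul ε)
  have hk := dk.hasFDerivAt
  have quad0 : ∀ q, kap f ν h ν₁ ε q ^ 2 - 2 * Hm f ν h ν₁ q * kap f ν h ν₁ ε q
      + Kg f ν h ν₁ q = 0 := by
    intro q
    have h1 := Real.sq_sqrt (hHK q).le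
    rw [kap]
    linear_combination ε ^ 2 * h1 + (Hm f ν h ν₁ q ^ 2 - Kg f ν h ν₁ q) * hεsq
  have quadD : ∀ q, Et f q * Gt h q - Ft f h q ^ 2 ≠ 0 →
      (Et f q * Gt h q - Ft f h q ^ 2) * kap f ν h ν₁ ε q ^ 2
      - (Et f q * Nt1 h ν₁ q - 2 * Ft f h q * Mt h ν q + Gt h q * Lt f ν q) * kap f ν h ν₁ ε q
      + (Lt f ν q * Nt1 h ν₁ q - Mt h ν q ^ 2) = 0 := by
    intro q hq
    have h1 := quad0 q
    rw [Hm, Kg] at h1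
    field_simp at h1
    linear_combination h1
  have quadE : (fun q => (Et f q * Gt h q - Ft f h q ^ 2) * kap f ν h ν₁ ε q ^ 2
      - (Et f q * Nt1 h ν₁ q - 2 * Ft f h q * Mt h ν q + Gt h q * Lt f ν q) * kap f ν h ν₁ ε q
      + (Lt f ν q * Nt1 h ν₁ q - Mt h ν q ^ 2)) =ᶠ[nhds 0] fun _ => (0 : ℝ) := by
    have h1 := hD.continuousAt.eventually_ne (y := 0) (by rw [vD]; norm_num)
    filter_upwards [h1] with q hq using quadD q hq
  have qv := quadD 0 (by rw [vD]; norm_num)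
  have qd : HasFDerivAt (fun q => (Et f q * Gt h q - Ft f h q ^ 2) * kap f ν h ν₁ ε q ^ 2
      - (Et f q * Nt1 h ν₁ q - 2 * Ft f h q * Mt h ν q + Gt h q * Lt f ν q) * kap f ν h ν₁ ε q
      + (Lt f ν q * Nt1 h ν₁ q - Mt h ν q ^ 2)) _ 0 :=
    ((((hE.mul hG).sub (hF.pow 2)).mul (hk.pow 2)).sub
      ((((hE.mul hN).sub ((hF.const_mul 2).mul hM)).add (hG.mul hL)).mul hk)).add
      ((hL.mul hN).sub (hM.pow 2))
  have qe := qd.unique ((hasFDerivAt_const (0 : ℝ) (0 : ℝ × ℝ)).congr_of_eventuallyEq quadE)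
  have qe1 := DFunLike.congr_fun qe ((0, 1) : ℝ × ℝ)
  simp [Ev, Lv, Mv, vE, vF, vG] at qe1
  rw [vE, vF, vG] at qv
  have hkt' : Mt h ν 0 ≠ 0 := hkt
  have hrc' : fderiv ℝ (Nt1 h ν₁) 0 (0, 1) - 2 * fderiv ℝ (Ft f h) 0 (0, 1) * Mt h ν 0
      - fderiv ℝ (Gt h) 0 (0, 1) * Nt1 h ν₁ 0 ≠ 0 := fun h0 => hrc (by
    show 24 * (fderiv ℝ (Nt1 h ν₁) 0 (0, 1) - 2 * fderiv ℝ (Ft f h) 0 (0, 1) * Mt h ν 0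
      - fderiv ℝ (Gt h) 0 (0, 1) * Nt1 h ν₁ 0) = 0
    rw [h0, mul_zero])
  show _ ∧ KC f ν h ν₁ ε 0 = -((Mt h ν 0) ^ 2 * (kap f ν h ν₁ ε 0) ^ 4) /
        ((Mt h ν 0) ^ 2 + (Lt f ν 0 - kap f ν h ν₁ ε 0) ^ 2) ^ 2 ∧ _
  have hκ0 := hκ 0
  have kvne : fderiv ℝ (kap f ν h ν₁ ε) 0 (0, 1) ≠ 0 := by
    intro h0
    rw [h0] at qe1
    have hkl : kap f ν h ν₁ ε 0 - Lt f ν 0 ≠ 0 := by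
      intro h1
      apply hkt'
      have : Mt h ν 0 ^ 2 = 0 := by
        linear_combination -qv + (kap f ν h ν₁ ε 0 - Nt1 h ν₁ 0) * h1
      exact pow_eq_zero_iff (by norm_num) |>.1 this
    apply hrc'
    apply mul_left_cancel₀ hkl
    linear_combination -qe1 + fderiv ℝ (Gt h) 0 (0, 1) * qv
  -- ρ
  have hr : HasFDerivAt (rho f ν h ν₁ ε) _ 0 := (hasDerivAt_inv hκ0).comp_hasFDerivAt 0 hk
  have hrv : fderiv ℝ (rho f ν h ν₁ ε) 0 (0, 1) ≠ 0 := by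
    rw [hr.fderiv]
    simp [hκ0, kvne]
  have hr' := hr.differentiableAt.hasFDerivAt
  have hC : HasFDerivAt (Cf f ν h ν₁ ε) _ 0 := df.hasFDerivAt.add (hr'.smul dν.hasFDerivAt)
  have Cv : fderiv ℝ (Cf f ν h ν₁ ε) 0 (0, 1) = fderiv ℝ (rho f ν h ν₁ ε) 0 (0, 1) • ν 0 := by
    rw [hC.fderiv]; simp [fv0, νv0]
  have Cu : fderiv ℝ (Cf f ν h ν₁ ε) 0 (1, 0) = pu f 0 + (rho f ν h ν₁ ε 0 • pu ν 0
      + fderiv ℝ (rho f ν h ν₁ ε) 0 (1, 0) • ν 0) := by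
    rw [hC.fderiv]; simp [pu]
  -- e
  have dx : DifferentiableAt ℝ (xj f ν h ν₁ ε) 0 :=
    ((dM'.sub (dk.mul hF.differentiableAt)).neg.smul dfu).add
      ((dL'.sub (dk.mul hE.differentiableAt)).smul dh)
  have xx : dot3 (xj f ν h ν₁ ε 0) (xj f ν h ν₁ ε 0) =
      Mt h ν 0 ^ 2 + (Lt f ν 0 - kap f ν h ν₁ ε 0) ^ 2 := by
    rw [xj, vE, vF]
    simp only [dot3] at oaa obb oab
    simp [dot3]
    linear_combination Mt h ν 0 ^ 2 * oaa + (Lt f ν 0 - kap f ν h ν₁ ε 0) ^ 2 * obb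
      - 2 * Mt h ν 0 * (Lt f ν 0 - kap f ν h ν₁ ε 0) * oab
  have xpos : 0 < Mt h ν 0 ^ 2 + (Lt f ν 0 - kap f ν h ν₁ ε 0) ^ 2 := by positivity
  have dn : DifferentiableAt ℝ (fun q => norm3 (xj f ν h ν₁ ε q)) 0 :=
    (aux_dot_fd dx dx).1.sqrt (by rw [xx]; exact xpos.ne')
  have nsq : norm3 (xj f ν h ν₁ ε 0) ^ 2 = Mt h ν 0 ^ 2 + (Lt f ν 0 - kap f ν h ν₁ ε 0) ^ 2 := by
    rw [norm3, Real.sq_sqrt (by rw [xx]; exact xpos.le), xx]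
  have nne : norm3 (xj f ν h ν₁ ε 0) ≠ 0 := fun h0 => by
    rw [h0] at nsq; norm_num at nsq; exact xpos.ne nsq
  have de : DifferentiableAt ℝ (ej f ν h ν₁ ε) 0 := (dn.inv nne).smul dx
  have eν : ∀ q, dot3 (ν q) (ej f ν h ν₁ ε q) = 0 := by
    intro q
    have h1 := H.orth_fu_ν q
    have h2 := aux_hν H q
    rw [ej]
    generalize (norm3 (xj f ν h ν₁ ε q))⁻¹ = n
    simp only [xj, dot3, Pi.smul_apply, Pi.add_apply, smul_eq_mul] at h1 h2 ⊢
    linear_combination n *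
      ((-(Mt h ν q - kap f ν h ν₁ ε q * Ft f h q)) * h1 +
      (Lt f ν q - kap f ν h ν₁ ε q * Et f q) * h2)
  have eνd : ∀ w, dot3 (ν 0) (fderiv ℝ (ej f ν h ν₁ ε) 0 w) =
      - dot3 (fderiv ℝ ν 0 w) (ej f ν h ν₁ ε 0) := by
    intro w
    have h1 := (aux_dot_fd dν de).2 w
    rw [show (fun q => dot3 (ν q) (ej f ν h ν₁ ε q)) = fun _ => (0 : ℝ) from funext eν] at h1
    simp at h1
    linarith
  have ev : dot3 (ν 0) (fderiv ℝ (ej f ν h ν₁ ε) 0 (0, 1)) = 0 := by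
    rw [eνd, νv0, dot0l, neg_zero]
  have eu : dot3 (ν 0) (fderiv ℝ (ej f ν h ν₁ ε) 0 (1, 0)) =
      -((norm3 (xj f ν h ν₁ ε 0))⁻¹ * (Mt h ν 0 * kap f ν h ν₁ ε 0)) := by
    rw [eνd]
    have h1 : Lt f ν 0 = -dot3 (pu f 0) (pu ν 0) := rfl
    have h2 : Mt h ν 0 = -dot3 (h 0) (pu ν 0) := rfl
    show -dot3 (pu ν 0) _ = _
    have h3 : dot3 (pu ν 0) (ej f ν h ν₁ ε 0) = (norm3 (xj f ν h ν₁ ε 0))⁻¹ *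
        (-Mt h ν 0 * dot3 (pu f 0) (pu ν 0)
          + (Lt f ν 0 - kap f ν h ν₁ ε 0) * dot3 (h 0) (pu ν 0)) := by
      rw [ej]
      generalize (norm3 (xj f ν h ν₁ ε 0))⁻¹ = n
      rw [xj, vE, vF]
      simp [dot3]; ring
    rw [h3]
    linear_combination (-(norm3 (xj f ν h ν₁ ε 0))⁻¹) * (- Mt h ν 0 * h1 +
      (Lt f ν 0 - kap f ν h ν₁ ε 0) * h2)
  -- first fundamental form
  have smull : ∀ (c : ℝ) (a b : R3), dot3 (c • a) b = c * dot3 a b := fun c a b => by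
    simp [dot3]; ring
  have vN : NC f ν h ν₁ ε 0 = 0 := by
    simp only [NC, pv]; rw [Cv, smull, ev]; simp
  have vM : MC f ν h ν₁ ε 0 = fderiv ℝ (rho f ν h ν₁ ε) 0 (0, 1) *
      ((norm3 (xj f ν h ν₁ ε 0))⁻¹ * (Mt h ν 0 * kap f ν h ν₁ ε 0)) := by
    simp only [MC, pv]; rw [Cv, smull]; unfold pu; rw [eu]; ring
  have rk : rho f ν h ν₁ ε 0 * kap f ν h ν₁ ε 0 = 1 := inv_mul_cancel₀ hκ0
  have Cuν : dot3 (fderiv ℝ (Cf f ν h ν₁ ε) 0 (1, 0)) (ν 0) =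
      fderiv ℝ (rho f ν h ν₁ ε) 0 (1, 0) := by
    rw [Cu]
    simp only [dot3, Pi.smul_apply, Pi.add_apply, smul_eq_mul] at oac νν occ ⊢
    linear_combination oac + rho f ν h ν₁ ε 0 * νν + fderiv ℝ (rho f ν h ν₁ ε) 0 (1, 0) * occ
  have Cua : dot3 (fderiv ℝ (Cf f ν h ν₁ ε) 0 (1, 0)) (pu f 0) =
      1 - rho f ν h ν₁ ε 0 * Lt f ν 0 := by
    rw [Cu, Lt]
    simp only [dot3, Pi.smul_apply, Pi.add_apply, smul_eq_mul] at oaa oac ⊢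
    linear_combination oaa + fderiv ℝ (rho f ν h ν₁ ε) 0 (1, 0) * oac
  have Cub : dot3 (fderiv ℝ (Cf f ν h ν₁ ε) 0 (1, 0)) (h 0) =
      - (rho f ν h ν₁ ε 0 * Mt h ν 0) := by
    rw [Cu, Mt]
    simp only [dot3, Pi.smul_apply, Pi.add_apply, smul_eq_mul] at oab obc ⊢
    linear_combination oab + fderiv ℝ (rho f ν h ν₁ ε) 0 (1, 0) * obc
  have vEC : EC f ν h ν₁ ε 0 = (1 - rho f ν h ν₁ ε 0 * Lt f ν 0) ^ 2 +
      (rho f ν h ν₁ ε 0 * Mt h ν 0) ^ 2 + fderiv ℝ (rho f ν h ν₁ ε) 0 (1, 0) ^ 2 := by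
    rw [EC, pars]
    simp only [show pu (Cf f ν h ν₁ ε) 0 = fderiv ℝ (Cf f ν h ν₁ ε) 0 (1, 0) from rfl]
    rw [Cua, Cub, Cuν]; ring
  have vFC : FC f ν h ν₁ ε 0 = fderiv ℝ (rho f ν h ν₁ ε) 0 (0, 1) *
      fderiv ℝ (rho f ν h ν₁ ε) 0 (1, 0) := by
    rw [FC, comm, ← Cuν]
    simp only [pv]
    rw [Cv, smull, comm]; rfl
  have vGC : GC f ν h ν₁ ε 0 = fderiv ℝ (rho f ν h ν₁ ε) 0 (0, 1) ^ 2 := by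
    simp only [GC, pv]
    rw [Cv, smull, comm, smull, occ]; ring
  have rne : rho f ν h ν₁ ε 0 ≠ 0 := inv_ne_zero hκ0
  have hKC : KC f ν h ν₁ ε 0 = -((Mt h ν 0) ^ 2 * (kap f ν h ν₁ ε 0) ^ 4) /
        ((Mt h ν 0) ^ 2 + (Lt f ν 0 - kap f ν h ν₁ ε 0) ^ 2) ^ 2 := by
    rw [KC, vN, vM, vEC, vFC, vGC]
    rw [show ((1 - rho f ν h ν₁ ε 0 * Lt f ν 0) ^ 2 +
      (rho f ν h ν₁ ε 0 * Mt h ν 0) ^ 2 + fderiv ℝ (rho f ν h ν₁ ε) 0 (1, 0) ^ 2) *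
      fderiv ℝ (rho f ν h ν₁ ε) 0 (0, 1) ^ 2 - (fderiv ℝ (rho f ν h ν₁ ε) 0 (0, 1) *
      fderiv ℝ (rho f ν h ν₁ ε) 0 (1, 0)) ^ 2 = (fderiv ℝ (rho f ν h ν₁ ε) 0 (0, 1) *
        rho f ν h ν₁ ε 0 * norm3 (xj f ν h ν₁ ε 0)) ^ 2 by
        rw [mul_pow _ (norm3 _), nsq]
        linear_combination (-(fderiv ℝ (rho f ν h ν₁ ε) 0 (0, 1) ^ 2 *
          (1 + rho f ν h ν₁ ε 0 * kap f ν h ν₁ ε 0 - 2 * rho f ν h ν₁ ε 0 * Lt f ν 0))) * rk]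
    rw [← nsq, show rho f ν h ν₁ ε 0 = (kap f ν h ν₁ ε 0)⁻¹ from rfl]
    field_simp
    ring
  refine ⟨?_, hKC, ?_⟩
  · rw [injective_iff_map_eq_zero]
    rintro ⟨a, b⟩ hab
    have h1 : fderiv ℝ (Cf f ν h ν₁ ε) 0 (a, b) = a • fderiv ℝ (Cf f ν h ν₁ ε) 0 (1, 0)
        + b • fderiv ℝ (Cf f ν h ν₁ ε) 0 (0, 1) := by
      rw [← map_smul, ← map_smul, ← map_add]; simp
    rw [h1, Cv] at hab
    have addl : ∀ (a b c : R3), dot3 (a + b) c = dot3 a c + dot3 b c := fun a b c => by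
      simp [dot3]; ring
    have h2 := congrArg (fun x => dot3 x (h 0)) hab
    have h3 := congrArg (fun x => dot3 x (ν 0)) hab
    simp only [addl, smull, Cub, Cuν, occ, dot0l, comm (ν 0) (h 0), obc] at h2 h3
    have ha : a = 0 := by
      have : a * (rho f ν h ν₁ ε 0 * Mt h ν 0) = 0 := by linear_combination -h2
      exact (mul_eq_zero.1 this).resolve_right (mul_ne_zero rne hkt')
    subst ha
    have hb : b = 0 := by
      have : b * fderiv ℝ (rho f ν h ν₁ ε) 0 (0, 1) = 0 := by linear_combination h3
      exact (mul_eq_zero.1 this).resolve_right hrv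
    subst hb; rfl
  · rw [hKC, neg_div, neg_lt_zero]
    positivity
end
end

section
/- Under the adapted pure-frontal setup with focal data, assume κ_t(0) ≠ 0 and r_c(0) ≠ 0 (so f has a 5/2-cuspidal edge at 0 and C_j is an immersion at 0). Then for j = 1,2 the mean curvature of the focal surface C_j at 0, computed with the unit normal e_j = x_j/‖x_j‖ as H^{C_j} = (E^C N^C − 2F^C M^C + G^C L^C)/(2(E^C G^C − (F^C)²)) with E^C = ⟨(C_j)_u,(C_j)_u⟩, F^C = ⟨(C_j)_u,(C_j)_v⟩, G^C = ⟨(C_j)_v,(C_j)_v⟩, L^C = −⟨(C_j)_u,(e_j)_u⟩, M^C = −⟨(C_j)_v,(e_j)_u⟩, N^C = −⟨(C_j)_v,(e_j)_v⟩, satisfies (with all invariants and their u-derivatives evaluated at u = 0): H^{C_j}(0) = −κ_j·(κ_s·(κ_t² + (κ_ν−κ_j)²) + κ_t'·(κ_ν−κ_j) − κ_t·κ_ν')/(2(κ_t² + (κ_ν−κ_j)²)^{3/2}). -/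
open Filter

noncomputable section

theorem two_le_top : (1 + 1 : WithTop ℕ∞) ≤ ((⊤ : ℕ∞) : WithTop ℕ∞) := by
  have : ((2 : ℕ∞) : WithTop ℕ∞) ≤ ((⊤ : ℕ∞) : WithTop ℕ∞) := WithTop.coe_le_coe.mpr le_top
  rw [one_add_one_eq_two]
  exact this

theorem d3_add_left (a b c : R3) : dot3 (a + b) c = dot3 a c + dot3 b c := by
  simp [dot3]; ring

theorem d3_add_right (a b c : R3) : dot3 c (a + b) = dot3 c a + dot3 c b := by
  simp [dot3]; ring

theorem d3_smul_left (r : ℝ) (a c : R3) : dot3 (r • a) c = r * dot3 a c := by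
  simp [dot3]; ring

theorem d3_smul_right (r : ℝ) (a c : R3) : dot3 c (r • a) = r * dot3 c a := by
  simp [dot3]; ring

theorem d3_comm (a c : R3) : dot3 c a = dot3 a c := by
  simp [dot3]; ring

theorem d3_zero_left (c : R3) : dot3 0 c = 0 := by
  simp [dot3]

theorem d3_pos (a : R3) (h : a ≠ 0) : 0 < dot3 a a := by
  by_contra hc
  apply h
  simp only [dot3] at hc
  have h0 : a 0 * a 0 = 0 := by nlinarith [mul_self_nonneg (a 0), mul_self_nonneg (a 1), mul_self_nonneg (a 2)]
  have h1 : a 1 * a 1 = 0 := by nlinarith [mul_self_nonneg (a 0), mul_self_nonneg (a 1), mul_self_nonneg (a 2)]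
  have h2 : a 2 * a 2 = 0 := by nlinarith [mul_self_nonneg (a 0), mul_self_nonneg (a 1), mul_self_nonneg (a 2)]
  ext i
  fin_cases i
  · simpa using h0
  · simpa using h1
  · simpa using h2

theorem d3_expand (A B n w : R3) (hAA : dot3 A A = 1) (hBB : dot3 B B = 1) (hnn : dot3 n n = 1)
    (hAB : dot3 A B = 0) (hAn : dot3 A n = 0) (hBn : dot3 B n = 0) :
    w = dot3 A w • A + dot3 B w • B + dot3 n w • n := by
  have hM : Matrix.of ![A, B, n] * (Matrix.of ![A, B, n]).transpose = 1 := by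
    simp only [dot3] at *
    ext i j
    fin_cases i <;> fin_cases j <;>
      simp [Matrix.mul_apply, Fin.sum_univ_three] <;> linarith
  have hM' := mul_eq_one_comm.mp hM
  have key : ∀ i j, A i * A j + B i * B j + n i * n j = (1 : Matrix (Fin 3) (Fin 3) ℝ) i j := by
    intro i j
    rw [← hM']
    simp [Matrix.mul_apply, Fin.sum_univ_three]
  ext i
  simp only [dot3, Pi.add_apply, Pi.smul_apply, smul_eq_mul]
  have k0 := key i 0
  have k1 := key i 1
  have k2 := key i 2
  have : w i = (1 : Matrix (Fin 3) (Fin 3) ℝ) i 0 * w 0 + (1 : Matrix (Fin 3) (Fin 3) ℝ) i 1 * w 1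
      + (1 : Matrix (Fin 3) (Fin 3) ℝ) i 2 * w 2 := by
    fin_cases i <;> simp [Matrix.one_apply]
  rw [this, ← k0, ← k1, ← k2]; ring

section
variable {E : Type*} [NormedAddCommGroup E] [NormedSpace ℝ E]

theorem line_u {g : ℝ × ℝ → E} (hg : DifferentiableAt ℝ g 0) :
    HasDerivAt (fun t : ℝ => g (t, 0)) (pu g 0) 0 := by
  have h1 : HasDerivAt (fun t : ℝ => ((t, 0) : ℝ × ℝ)) (1, 0) 0 :=
    (hasDerivAt_id (0:ℝ)).prodMk (hasDerivAt_const (0:ℝ) (0:ℝ))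
  have h2 : HasFDerivAt g (fderiv ℝ g 0) ((0:ℝ), (0:ℝ)) := hg.hasFDerivAt
  exact HasFDerivAt.comp_hasDerivAt (f := fun t : ℝ => ((t, 0) : ℝ × ℝ)) (0:ℝ) h2 h1

theorem line_v {g : ℝ × ℝ → E} (hg : DifferentiableAt ℝ g 0) :
    HasDerivAt (fun t : ℝ => g (0, t)) (pv g 0) 0 := by
  have h1 : HasDerivAt (fun t : ℝ => ((0, t) : ℝ × ℝ)) (0, 1) 0 :=
    (hasDerivAt_const (0:ℝ) (0:ℝ)).prodMk (hasDerivAt_id (0:ℝ))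
  have h2 : HasFDerivAt g (fderiv ℝ g 0) ((0:ℝ), (0:ℝ)) := hg.hasFDerivAt
  exact HasFDerivAt.comp_hasDerivAt (f := fun t : ℝ => ((0, t) : ℝ × ℝ)) (0:ℝ) h2 h1

theorem pu_const {g : ℝ × ℝ → E} (hg : DifferentiableAt ℝ g 0) (c : E) (h : ∀ u, g (u, 0) = c) :
    pu g 0 = 0 := by
  have h1 := line_u hg
  have h2 : (fun t : ℝ => g (t, 0)) = fun _ => c := funext h
  rw [h2] at h1
  exact h1.unique (hasDerivAt_const _ _)

theorem smul_u {r : ℝ × ℝ → ℝ} {g : ℝ × ℝ → E} (hr : DifferentiableAt ℝ r 0)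
    (hg : DifferentiableAt ℝ g 0) :
    pu (fun p => r p • g p) 0 = r 0 • pu g 0 + pu r 0 • g 0 :=
  (line_u (hr.smul hg)).unique ((line_u hr).smul (line_u hg))

theorem smul_v {r : ℝ × ℝ → ℝ} {g : ℝ × ℝ → E} (hr : DifferentiableAt ℝ r 0)
    (hg : DifferentiableAt ℝ g 0) :
    pv (fun p => r p • g p) 0 = r 0 • pv g 0 + pv r 0 • g 0 :=
  (line_v (hr.smul hg)).unique ((line_v hr).smul (line_v hg))

theorem add_u {r g : ℝ × ℝ → E} (hr : DifferentiableAt ℝ r 0)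
    (hg : DifferentiableAt ℝ g 0) :
    pu (fun p => r p + g p) 0 = pu r 0 + pu g 0 :=
  (line_u (hr.add hg)).unique ((line_u hr).add (line_u hg))

theorem add_v {r g : ℝ × ℝ → E} (hr : DifferentiableAt ℝ r 0)
    (hg : DifferentiableAt ℝ g 0) :
    pv (fun p => r p + g p) 0 = pv r 0 + pv g 0 :=
  (line_v (hr.add hg)).unique ((line_v hr).add (line_v hg))

end

theorem d3_diff {a b : ℝ × ℝ → R3} {p : ℝ × ℝ} (ha : DifferentiableAt ℝ a p)
    (hb : DifferentiableAt ℝ b p) : DifferentiableAt ℝ (fun p => dot3 (a p) (b p)) p := by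
  have h1 := differentiableAt_pi.1 ha
  have h2 := differentiableAt_pi.1 hb
  exact (((h1 0).mul (h2 0)).add ((h1 1).mul (h2 1))).add ((h1 2).mul (h2 2))

theorem d3_deriv {a b : ℝ → R3} {a' b' : R3} {t : ℝ} (ha : HasDerivAt a a' t)
    (hb : HasDerivAt b b' t) :
    HasDerivAt (fun p => dot3 (a p) (b p)) (dot3 a' (b t) + dot3 (a t) b') t := by
  have h1 := hasDerivAt_pi.1 ha
  have h2 := hasDerivAt_pi.1 hb
  have := (((h1 0).mul (h2 0)).add ((h1 1).mul (h2 1))).add ((h1 2).mul (h2 2))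
  refine HasDerivAt.congr_deriv this ?_
  simp only [dot3]; ring

theorem d3_u {a b : ℝ × ℝ → R3} (ha : DifferentiableAt ℝ a 0) (hb : DifferentiableAt ℝ b 0) :
    pu (fun p => dot3 (a p) (b p)) 0 = dot3 (pu a 0) (b 0) + dot3 (a 0) (pu b 0) :=
  (line_u (d3_diff ha hb)).unique (d3_deriv (line_u ha) (line_u hb))

theorem d3_v {a b : ℝ × ℝ → R3} (ha : DifferentiableAt ℝ a 0) (hb : DifferentiableAt ℝ b 0) :
    pv (fun p => dot3 (a p) (b p)) 0 = dot3 (pv a 0) (b 0) + dot3 (a 0) (pv b 0) :=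
  (line_v (d3_diff ha hb)).unique (d3_deriv (line_v ha) (line_v hb))

theorem pu_diff {g : ℝ × ℝ → R3} (hg : ContDiff ℝ (⊤ : ℕ∞) g) : Differentiable ℝ (pu g) := by
  have : ContDiff ℝ 1 (fderiv ℝ g) := hg.fderiv_right two_le_top
  exact (this.clm_apply contDiff_const).differentiable (by simp)

theorem pv_diff {g : ℝ × ℝ → R3} (hg : ContDiff ℝ (⊤ : ℕ∞) g) : Differentiable ℝ (pv g) := by
  have : ContDiff ℝ 1 (fderiv ℝ g) := hg.fderiv_right two_le_top
  exact (this.clm_apply contDiff_const).differentiable (by simp)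

theorem pvpu {g : ℝ × ℝ → R3} (hg : ContDiff ℝ (⊤ : ℕ∞) g) (p : ℝ × ℝ) :
    pv (pu g) p = pu (pv g) p := by
  have h1 : Differentiable ℝ (fderiv ℝ g) :=
    (hg.fderiv_right (m := 1) two_le_top).differentiable (by simp)
  have h2 : IsSymmSndFDerivAt ℝ g p :=
    (hg.contDiffAt (x := p)).isSymmSndFDerivAt (by simpa [one_add_one_eq_two] using two_le_top)
  have h3 : ∀ d : ℝ × ℝ, fderiv ℝ (fun q => fderiv ℝ g q d) p
      = (fderiv ℝ (fderiv ℝ g) p).flip d := by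
    intro d
    rw [fderiv_clm_apply (h1 p) (differentiableAt_const d)]
    simp
  show fderiv ℝ (fun q => fderiv ℝ g q (1,0)) p (0,1) = fderiv ℝ (fun q => fderiv ℝ g q (0,1)) p (1,0)
  rw [h3, h3]
  simp only [ContinuousLinearMap.flip_apply]
  exact h2 (0,1) (1,0)

theorem pvpu_zero {g g1 : ℝ × ℝ → R3} (hg : ContDiff ℝ (⊤ : ℕ∞) g)
    (h : ∀ p : ℝ × ℝ, pv g p = p.2 • g1 p) : pv (pu g) 0 = 0 := by
  rw [pvpu hg]
  exact pu_const (pv_diff hg 0) 0 (fun u => by simp [h])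

/-- at a 5/2-cuspidal edge of f (κ_t(0) ≠ 0, r_c(0) ≠ 0), the mean
curvature of the focal surface C_j at 0 equals
−κ_j(κ_s(κ_t² + (κ_ν−κ_j)²) + κ_t'(κ_ν−κ_j) − κ_tκ_ν')/(2(κ_t² + (κ_ν−κ_j)²)^{3/2}). -/
theorem stmt_19 (f ν h ν₁ : ℝ × ℝ → R3) (H : AdaptedPureFrontal f ν h ν₁)
    (ε : ℝ) (hε : ε = 1 ∨ ε = -1)
    (hHK : ∀ p : ℝ × ℝ, Hm f ν h ν₁ p ^ 2 - Kg f ν h ν₁ p > 0)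
    (hκ : ∀ p : ℝ × ℝ, kap f ν h ν₁ ε p ≠ 0)
    (hx : ∀ᶠ p in nhds (0 : ℝ × ℝ), xj f ν h ν₁ ε p ≠ 0)
    (hkt : kt h ν 0 ≠ 0) (hrc : rc f ν h ν₁ 0 ≠ 0) :
    HC f ν h ν₁ ε 0 =
      -(kap f ν h ν₁ ε 0 *
          (ks f h 0 * ((kt h ν 0) ^ 2 + (kν f ν 0 - kap f ν h ν₁ ε 0) ^ 2) +
            deriv (kt h ν) 0 * (kν f ν 0 - kap f ν h ν₁ ε 0) -
            kt h ν 0 * deriv (kν f ν) 0)) /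
        (2 * Real.sqrt ((kt h ν 0) ^ 2 + (kν f ν 0 - kap f ν h ν₁ ε 0) ^ 2) ^ 3) := by
  have dA : DifferentiableAt ℝ (pu f) 0 := pu_diff H.smooth_f 0
  have dnu : DifferentiableAt ℝ (pu ν) 0 := pu_diff H.smooth_ν 0
  have df : DifferentiableAt ℝ f 0 := H.smooth_f.differentiable (by simp) 0
  have dn : DifferentiableAt ℝ ν 0 := H.smooth_ν.differentiable (by simp) 0
  have dh : DifferentiableAt ℝ h 0 := H.smooth_h.differentiable (by simp) 0
  have dn1 : DifferentiableAt ℝ ν₁ 0 := H.smooth_ν₁.differentiable (by simp) 0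
  have dE : DifferentiableAt ℝ (Et f) 0 := d3_diff dA dA
  have dF : DifferentiableAt ℝ (Ft f h) 0 := d3_diff dA dh
  have dG : DifferentiableAt ℝ (Gt h) 0 := d3_diff dh dh
  have dL : DifferentiableAt ℝ (Lt f ν) 0 := (d3_diff dA dnu).neg
  have dM : DifferentiableAt ℝ (Mt h ν) 0 := (d3_diff dh dnu).neg
  have dN : DifferentiableAt ℝ (Nt1 h ν₁) 0 := (d3_diff dh dn1).neg
  have E0 : Et f 0 = 1 := H.adapted_fu 0
  have F0 : Ft f h 0 = 0 := H.adapted_fu_h 0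
  have G0 : Gt h 0 = 1 := H.adapted_h 0
  have den0 : Et f 0 * Gt h 0 - Ft f h 0 ^ 2 ≠ 0 := by rw [E0, F0, G0]; norm_num
  have dden : DifferentiableAt ℝ (fun p => Et f p * Gt h p - Ft f h p ^ 2) 0 :=
    (dE.mul dG).sub (dF.pow 2)
  have dHm : DifferentiableAt ℝ (Hm f ν h ν₁) 0 := by
    unfold Hm
    have d1 : DifferentiableAt ℝ (fun p => Et f p * Nt1 h ν₁ p - 2 * Ft f h p * Mt h ν p + Gt h p * Lt f ν p) 0 := by
      fun_prop
    have d2 : DifferentiableAt ℝ (fun p => (2 * (Et f p * Gt h p - Ft f h p ^ 2))⁻¹) 0 :=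
      DifferentiableAt.inv (dden.const_mul 2) (mul_ne_zero two_ne_zero den0)
    simp only [div_eq_mul_inv]
    exact d1.mul d2
  have dKg : DifferentiableAt ℝ (Kg f ν h ν₁) 0 := by
    unfold Kg
    have d1 : DifferentiableAt ℝ (fun p => Lt f ν p * Nt1 h ν₁ p - Mt h ν p ^ 2) 0 := by
      fun_prop
    have d2 : DifferentiableAt ℝ (fun p => ((Et f p * Gt h p - Ft f h p ^ 2))⁻¹) 0 :=
      DifferentiableAt.inv dden den0
    simp only [div_eq_mul_inv]
    exact d1.mul d2
  have dkap : DifferentiableAt ℝ (kap f ν h ν₁ ε) 0 := by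
    unfold kap
    exact dHm.add (((dHm.pow 2).sub dKg).sqrt (hHK 0).ne' |>.const_mul ε)
  have drho : DifferentiableAt ℝ (rho f ν h ν₁ ε) 0 := dkap.inv (hκ 0)
  have hε2 : ε ^ 2 = 1 := by rcases hε with h | h <;> rw [h] <;> norm_num
  have quad : ∀ p, Et f p * Gt h p - Ft f h p ^ 2 ≠ 0 →
      (Et f p * Gt h p - Ft f h p ^ 2) * kap f ν h ν₁ ε p ^ 2
      - (Et f p * Nt1 h ν₁ p - 2 * Ft f h p * Mt h ν p + Gt h p * Lt f ν p) * kap f ν h ν₁ ε p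
      + (Lt f ν p * Nt1 h ν₁ p - Mt h ν p ^ 2) = 0 := by
    intro p hp
    have h1 : (Et f p * Nt1 h ν₁ p - 2 * Ft f h p * Mt h ν p + Gt h p * Lt f ν p)
        = 2 * (Et f p * Gt h p - Ft f h p ^ 2) * Hm f ν h ν₁ p := by
      unfold Hm; field_simp
    have h2 : (Lt f ν p * Nt1 h ν₁ p - Mt h ν p ^ 2)
        = (Et f p * Gt h p - Ft f h p ^ 2) * Kg f ν h ν₁ p := by
      unfold Kg; field_simp
    have h3 := Real.sq_sqrt (hHK p).le
    rw [h1, h2]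
    unfold kap
    linear_combination (Et f p * Gt h p - Ft f h p ^ 2) * (ε ^ 2 * h3 + (Hm f ν h ν₁ p ^ 2 - Kg f ν h ν₁ p) * hε2)
  -- frame at the origin
  have hhn : ∀ p, dot3 (h p) (ν p) = 0 := by
    rintro ⟨u, v⟩
    by_cases hv : v = 0
    · subst hv; exact H.adapted_h_ν u
    · have := H.orth_fv_ν (u, v)
      rw [H.fv_eq, d3_smul_left] at this
      exact (mul_eq_zero.mp this).resolve_left hv
  have fuv : pv (pu f) 0 = 0 := pvpu_zero H.smooth_f H.fv_eq
  have nuv : pv (pu ν) 0 = 0 := pvpu_zero H.smooth_ν H.νv_eq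
  have fv : pv f 0 = 0 := by rw [H.fv_eq]; simp
  have nv : pv ν 0 = 0 := by rw [H.νv_eq]; simp
  have AA : dot3 (pu f 0) (pu f 0) = 1 := E0
  have AB : dot3 (pu f 0) (h 0) = 0 := F0
  have BB : dot3 (h 0) (h 0) = 1 := G0
  have nn : dot3 (ν 0) (ν 0) = 1 := H.unit_ν 0
  have An : dot3 (pu f 0) (ν 0) = 0 := H.orth_fu_ν 0
  have Bn : dot3 (h 0) (ν 0) = 0 := hhn 0
  have Eu : pu (Et f) 0 = 0 := pu_const dE 1 H.adapted_fu
  have Fu : pu (Ft f h) 0 = 0 := pu_const dF 0 H.adapted_fu_h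
  have Gu : pu (Gt h) 0 = 0 := pu_const dG 1 H.adapted_h
  have e1 := Eu.symm.trans (d3_u dA dA)
  have e2 := Fu.symm.trans (d3_u dA dh)
  have e3 := Gu.symm.trans (d3_u dh dh)
  have e4 := (pu_const (d3_diff dA dn) 0 (fun u => H.orth_fu_ν (u, 0))).symm.trans (d3_u dA dn)
  have e5 := (pu_const (d3_diff dh dn) 0 (fun u => hhn (u, 0))).symm.trans (d3_u dh dn)
  have e6 := (pu_const (d3_diff dn dn) 1 (fun u => H.unit_ν (u, 0))).symm.trans (d3_u dn dn)
  have hL : Lt f ν 0 = - dot3 (pu f 0) (pu ν 0) := rfl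
  have hM : Mt h ν 0 = - dot3 (h 0) (pu ν 0) := rfl
  have ks0 : ks f h 0 = dot3 (pu (pu f) 0) (h 0) := rfl
  have n_nu : dot3 (ν 0) (pu ν 0) = 0 := by
    rw [d3_comm (ν 0) (pu ν 0)] at e6; linarith
  have nu_eq : pu ν 0 = (-Lt f ν 0) • pu f 0 + (-Mt h ν 0) • h 0 := by
    have := d3_expand _ _ _ (pu ν 0) AA BB nn AB An Bn
    rw [n_nu, zero_smul, add_zero] at this
    rw [hL, hM, neg_neg, neg_neg]; exact this
  have hvn : dot3 (pv h 0) (ν 0) = 0 := by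
    have h0 : (fun p => dot3 (h p) (ν p)) = fun _ => (0:ℝ) := funext hhn
    have h1 := d3_v dh dn
    rw [h0, nv, d3_comm 0 (h 0), d3_zero_left] at h1
    simp [pv] at h1
    exact h1.symm
  have Ev : pv (Et f) 0 = 0 := by
    refine (d3_v dA dA).trans ?_
    rw [fuv, d3_comm 0 (pu f 0), d3_zero_left]; simp
  have Fv : pv (Ft f h) 0 = dot3 (pu f 0) (pv h 0) := by
    refine (d3_v dA dh).trans ?_
    rw [fuv, d3_zero_left]; simp
  have Gv : pv (Gt h) 0 = 2 * dot3 (h 0) (pv h 0) := by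
    refine (d3_v dh dh).trans ?_
    rw [d3_comm (h 0) (pv h 0)]; ring
  have Lv : pv (Lt f ν) 0 = 0 := by
    have h1 := (line_v dL).unique (d3_deriv (line_v dA) (line_v dnu)).neg
    rw [h1, fuv, nuv]; simp [dot3]
  have Mv : pv (Mt h ν) 0 = Lt f ν 0 * pv (Ft f h) 0 + Mt h ν 0 * pv (Gt h) 0 / 2 := by
    have h1 := (line_v dM).unique (d3_deriv (line_v dh) (line_v dnu)).neg
    rw [h1, nuv, Fv, Gv]
    show -(dot3 (pv h 0) (pu ν 0) + dot3 (h 0) 0) = _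
    rw [nu_eq, d3_comm 0 (h 0), d3_zero_left, d3_add_right, d3_smul_right, d3_smul_right,
      d3_comm (pu f 0), d3_comm (h 0)]
    ring
  have q0 := quad 0 den0
  rw [E0, F0, G0] at q0
  have Hm0 : 2 * Hm f ν h ν₁ 0 = Nt1 h ν₁ 0 + Lt f ν 0 := by
    unfold Hm; rw [E0, F0, G0]; ring
  have kapne : 2 * kap f ν h ν₁ ε 0 - Nt1 h ν₁ 0 - Lt f ν 0 ≠ 0 := by
    have hs := (Real.sqrt_pos.mpr (hHK 0)).ne'
    have he : ε ≠ 0 := by rintro rfl; norm_num at hε2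
    have : 2 * kap f ν h ν₁ ε 0 - Nt1 h ν₁ 0 - Lt f ν 0
        = 2 * (ε * Real.sqrt (Hm f ν h ν₁ 0 ^ 2 - Kg f ν h ν₁ 0)) := by
      unfold kap; linarith
    rw [this]
    exact mul_ne_zero two_ne_zero (mul_ne_zero he hs)
  have hM0 : Mt h ν 0 ≠ 0 := hkt
  have hrc0 : pv (Nt1 h ν₁) 0 - 2 * pv (Ft f h) 0 * Mt h ν 0 - pv (Gt h) 0 * Nt1 h ν₁ 0 ≠ 0 := by
    intro h0; apply hrc
    show 24 * (pv (Nt1 h ν₁) 0 - 2 * pv (Ft f h) 0 * Mt h ν 0 - pv (Gt h) 0 * Nt1 h ν₁ 0) = 0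
    rw [h0, mul_zero]
  have kapL : kap f ν h ν₁ ε 0 - Lt f ν 0 ≠ 0 := by
    intro h0
    have : kap f ν h ν₁ ε 0 = Lt f ν 0 := by linarith
    rw [this] at q0
    apply hM0
    have : Mt h ν 0 ^ 2 = 0 := by linarith
    exact pow_eq_zero_iff two_ne_zero |>.mp this
  have kapv : pv (kap f ν h ν₁ ε) 0 ≠ 0 := by
    intro hk
    have lE := line_v dE
    have lF := line_v dF
    have lG := line_v dG
    have lL := line_v dL
    have lM := line_v dM
    have lN := line_v dN
    have lk := line_v dkap
    have l1 := ((((lE.mul lG).sub (lF.pow 2)).mul (lk.pow 2)).sub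
      ((((lE.mul lN).sub ((lF.const_mul 2).mul lM)).add (lG.mul lL)).mul lk)).add
      ((lL.mul lN).sub (lM.pow 2))
    have ev0 : ∀ᶠ t in nhds (0:ℝ), Et f (0,t) * Gt h (0,t) - Ft f h (0,t) ^ 2 ≠ 0 :=
      ((lE.mul lG).sub (lF.pow 2)).continuousAt.eventually_ne den0
    have l2 := (hasDerivAt_const (0:ℝ) (0:ℝ)).congr_of_eventuallyEq
      (ev0.mono (fun t ht => quad (0,t) ht))
    have l3 := l1.unique l2
    have z : ((0:ℝ),(0:ℝ)) = 0 := rfl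
    simp only [Pi.mul_apply, Pi.sub_apply, Pi.add_apply, Pi.pow_apply, z, E0, F0, G0, Ev, Lv, Mv, hk] at l3
    have : (kap f ν h ν₁ ε 0 - Lt f ν 0) * (pv (Nt1 h ν₁) 0 - 2 * pv (Ft f h) 0 * Mt h ν 0 - pv (Gt h) 0 * Nt1 h ν₁ 0) = 0 := by
      push_cast at l3
      linear_combination pv (Gt h) 0 * q0 - l3
    exact (mul_ne_zero kapL hrc0) this
  -- focal surface
  have rhou := (line_u drho).unique ((line_u dkap).inv (hκ 0))
  have rhov := (line_v drho).unique ((line_v dkap).inv (hκ 0))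
  have rv : pv (rho f ν h ν₁ ε) 0 ≠ 0 := by
    rw [rhov]
    exact div_ne_zero (neg_ne_zero.mpr kapv) (pow_ne_zero 2 (hκ 0))
  have Cu : pu (Cf f ν h ν₁ ε) 0 = pu f 0 + (rho f ν h ν₁ ε 0 • pu ν 0 + pu (rho f ν h ν₁ ε) 0 • ν 0) := by
    rw [← smul_u drho dn]
    exact add_u df (drho.smul dn)
  have Cv : pv (Cf f ν h ν₁ ε) 0 = pv (rho f ν h ν₁ ε) 0 • ν 0 := by
    have h1 := smul_v drho dn
    have h2 : pv (Cf f ν h ν₁ ε) 0 = _ := add_v df (drho.smul dn)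
    rw [h2]
    refine (congrArg (fun z => pv f 0 + z) h1).trans ?_
    rw [fv, nv]; simp
  have dc1 : DifferentiableAt ℝ (fun p => -(Mt h ν p - kap f ν h ν₁ ε p * Ft f h p)) 0 := by fun_prop
  have dc2 : DifferentiableAt ℝ (fun p => Lt f ν p - kap f ν h ν₁ ε p * Et f p) 0 := by fun_prop
  have dx : DifferentiableAt ℝ (xj f ν h ν₁ ε) 0 := (dc1.smul dA).add (dc2.smul dh)
  have c1u : pu (fun p => -(Mt h ν p - kap f ν h ν₁ ε p * Ft f h p)) 0 = - pu (Mt h ν) 0 := by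
    rw [(line_u dc1).unique (((line_u dM).sub ((line_u dkap).mul (line_u dF))).neg)]
    have z : ((0:ℝ),(0:ℝ)) = 0 := rfl
    rw [z, F0, Fu]; ring
  have c2u : pu (fun p => Lt f ν p - kap f ν h ν₁ ε p * Et f p) 0
      = pu (Lt f ν) 0 - pu (kap f ν h ν₁ ε) 0 := by
    rw [(line_u dc2).unique ((line_u dL).sub ((line_u dkap).mul (line_u dE)))]
    have z : ((0:ℝ),(0:ℝ)) = 0 := rfl
    rw [z, E0, Eu]; ring
  have x0 : xj f ν h ν₁ ε 0 = (-Mt h ν 0) • pu f 0 + (Lt f ν 0 - kap f ν h ν₁ ε 0) • h 0 := by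
    unfold xj; rw [E0, F0]; simp
  have xu : pu (xj f ν h ν₁ ε) 0 = ((-Mt h ν 0) • pu (pu f) 0 + (-pu (Mt h ν) 0) • pu f 0)
      + ((Lt f ν 0 - kap f ν h ν₁ ε 0) • pu h 0 + (pu (Lt f ν) 0 - pu (kap f ν h ν₁ ε) 0) • h 0) := by
    have h1 : pu (xj f ν h ν₁ ε) 0 = _ := add_u (dc1.smul dA) (dc2.smul dh)
    rw [h1]
    refine (congrArg₂ (· + ·) (smul_u dc1 dA) (smul_u dc2 dh)).trans ?_
    simp only [c1u, c2u, E0, F0, mul_zero, sub_zero, mul_one]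
  obtain ⟨c1v, c2v, xv⟩ : ∃ c1 c2 : ℝ, pv (xj f ν h ν₁ ε) 0 = c1 • pu f 0
      + ((Lt f ν 0 - kap f ν h ν₁ ε 0) • pv h 0 + c2 • h 0) := by
    have h1 : pv (xj f ν h ν₁ ε) 0 = _ := add_v (dc1.smul dA) (dc2.smul dh)
    refine ⟨pv (fun p => -(Mt h ν p - kap f ν h ν₁ ε p * Ft f h p)) 0,
      pv (fun p => Lt f ν p - kap f ν h ν₁ ε p * Et f p) 0, ?_⟩
    rw [h1]
    refine (congrArg₂ (· + ·) (smul_v dc1 dA) (smul_v dc2 dh)).trans ?_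
    rw [fuv, smul_zero, zero_add]
    simp only [E0, mul_one]
  have hxx : dot3 (xj f ν h ν₁ ε 0) (xj f ν h ν₁ ε 0)
      = (Mt h ν 0) ^ 2 + (Lt f ν 0 - kap f ν h ν₁ ε 0) ^ 2 := by
    rw [x0]
    simp only [d3_add_left, d3_add_right, d3_smul_left, d3_smul_right, d3_comm (pu f 0) (h 0), AA, AB, BB]
    ring
  have Dpos : 0 < (Mt h ν 0) ^ 2 + (Lt f ν 0 - kap f ν h ν₁ ε 0) ^ 2 := by positivity
  have ds : DifferentiableAt ℝ (fun p => (norm3 (xj f ν h ν₁ ε p))⁻¹) 0 := by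
    have hp : dot3 (xj f ν h ν₁ ε 0) (xj f ν h ν₁ ε 0) ≠ 0 := by rw [hxx]; exact Dpos.ne'
    refine DifferentiableAt.inv ((d3_diff dx dx).sqrt hp) ?_
    exact (Real.sqrt_pos.mpr (by rw [hxx]; exact Dpos)).ne'
  have eu : pu (ej f ν h ν₁ ε) 0 = _ := smul_u ds dx
  have ev : pv (ej f ν h ν₁ ε) 0 = _ := smul_v ds dx
  have s0 : norm3 (xj f ν h ν₁ ε 0)
      = Real.sqrt ((Mt h ν 0) ^ 2 + (Lt f ν 0 - kap f ν h ν₁ ε 0) ^ 2) := by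
    unfold norm3; rw [hxx]
  have dkt : deriv (kt h ν) 0 = pu (Mt h ν) 0 := (line_u dM).deriv
  have dkn : deriv (kν f ν) 0 = pu (Lt f ν) 0 := (line_u dL).deriv
  have kt0 : kt h ν 0 = Mt h ν 0 := rfl
  have kn0 : kν f ν 0 = Lt f ν 0 := rfl
  rw [dkt, dkn, kt0, kn0, ks0]
  have rho0 : rho f ν h ν₁ ε 0 = (kap f ν h ν₁ ε 0)⁻¹ := rfl
  have rhou' : pu (rho f ν h ν₁ ε) 0 = - pu (kap f ν h ν₁ ε) 0 / kap f ν h ν₁ ε 0 ^ 2 := rhou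
  have hκ0 := hκ 0
  have r2 := Real.sq_sqrt Dpos.le
  have rpos := Real.sqrt_pos.mpr Dpos
  rw [s0] at eu ev
  generalize pu (fun p => (norm3 (xj f ν h ν₁ ε p))⁻¹) 0 = su at eu
  generalize pv (fun p => (norm3 (xj f ν h ν₁ ε p))⁻¹) 0 = sv at ev
  generalize hr : Real.sqrt ((Mt h ν 0) ^ 2 + (Lt f ν 0 - kap f ν h ν₁ ε 0) ^ 2) = r at *
  have uA : dot3 (pu f 0) (pu (pu f) 0) = 0 := by
    rw [d3_comm (pu f 0) (pu (pu f) 0)] at e1; linarith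
  have uB : dot3 (h 0) (pu h 0) = 0 := by
    rw [d3_comm (h 0) (pu h 0)] at e3; linarith
  have uAB : dot3 (pu f 0) (pu h 0) = - dot3 (h 0) (pu (pu f) 0) := by
    rw [d3_comm (h 0) (pu (pu f) 0)] at e2; linarith
  have un : dot3 (ν 0) (pu (pu f) 0) = Lt f ν 0 := by
    rw [hL, d3_comm (pu (pu f) 0) (ν 0)]; linarith
  have uhn : dot3 (ν 0) (pu h 0) = Mt h ν 0 := by
    rw [hM, d3_comm (pu h 0) (ν 0)]; linarith
  have hvn' : dot3 (ν 0) (pv h 0) = 0 := by rw [d3_comm]; exact hvn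
  rw [d3_comm (h 0) (pu (pu f) 0)]
  rw [nu_eq] at Cu
  rw [x0, xu] at eu
  rw [x0, xv] at ev
  clear hL hM
  have gEC : EC f ν h ν₁ ε 0 = (kap f ν h ν₁ ε 0)⁻¹ ^ 2 * r ^ 2 + pu (rho f ν h ν₁ ε) 0 ^ 2 := by
    unfold EC; rw [Cu, rho0]
    simp only [d3_add_left, d3_add_right, d3_smul_left, d3_smul_right, d3_comm (pu f 0) (h 0),
      d3_comm (pu f 0) (ν 0), d3_comm (h 0) (ν 0), AA, AB, BB, An, Bn, nn]
    rw [r2]; field_simp; ring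
  have gFC : FC f ν h ν₁ ε 0 = pu (rho f ν h ν₁ ε) 0 * pv (rho f ν h ν₁ ε) 0 := by
    unfold FC; rw [Cu, Cv]
    simp only [d3_add_left, d3_add_right, d3_smul_left, d3_smul_right, An, Bn, nn]
    ring
  have gGC : GC f ν h ν₁ ε 0 = pv (rho f ν h ν₁ ε) 0 ^ 2 := by
    unfold GC; rw [Cv]
    simp only [d3_smul_left, d3_smul_right, nn]
    ring
  have gNC : NC f ν h ν₁ ε 0 = 0 := by
    unfold NC; rw [Cv, ev]
    simp only [d3_add_right, d3_smul_left, d3_smul_right, d3_comm (pu f 0) (ν 0), d3_comm (h 0) (ν 0),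
      An, Bn, hvn']
    ring
  have gMC : MC f ν h ν₁ ε 0 = pv (rho f ν h ν₁ ε) 0 * kap f ν h ν₁ ε 0 * Mt h ν 0 * r⁻¹ := by
    unfold MC; rw [Cv, eu]
    simp only [d3_add_right, d3_smul_left, d3_smul_right, d3_comm (pu f 0) (ν 0), d3_comm (h 0) (ν 0),
      An, Bn, un, uhn]
    ring
  have gLC : LC f ν h ν₁ ε 0 = r⁻¹ * (pu (rho f ν h ν₁ ε) 0 * kap f ν h ν₁ ε 0 * Mt h ν 0
      + (kap f ν h ν₁ ε 0)⁻¹ * (Mt h ν 0 * (pu (Lt f ν) 0 - pu (kap f ν h ν₁ ε) 0)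
        - (Lt f ν 0 - kap f ν h ν₁ ε 0) * pu (Mt h ν) 0 - r ^ 2 * dot3 (h 0) (pu (pu f) 0))) := by
    unfold LC; rw [Cu, eu, rho0]
    simp only [d3_add_left, d3_add_right, d3_smul_left, d3_smul_right, d3_comm (pu f 0) (h 0),
      d3_comm (pu f 0) (ν 0), d3_comm (h 0) (ν 0), AA, AB, BB, An, Bn, nn, un, uhn, uA, uB, uAB]
    rw [r2]; field_simp; ring
  unfold HC
  rw [gEC, gFC, gGC, gNC, gMC, gLC, rhou', ← r2]
  have hne := rpos.ne'
  generalize pv (rho f ν h ν₁ ε) 0 = w at *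
  generalize kap f ν h ν₁ ε 0 = k at *
  have hden : ((k⁻¹ ^ 2 * r ^ 2 + (-pu (kap f ν h ν₁ ε) 0 / k ^ 2) ^ 2) * w ^ 2 - (-pu (kap f ν h ν₁ ε) 0 / k ^ 2 * w) ^ 2)
     = k⁻¹ ^ 2 * r ^ 2 * w ^ 2 := by ring
  rw [hden]
  field_simp
  ring
end
end
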